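/- arXiv:1610.09965 — 2 statements merged into one kernel-verified Lean document; each statement's English description precedes it below -/
import Mathlib

section
/- In the Markov-modulated setting with P_π(A_1=0)=0, exactly one of the following three alternatives holds for the embedded products (Π_{τ_n(i)})_{n≥0}: (T1') Π_{τ_n(i)}→0 a.s.; (T2') P_i(|Π_{τ(i)}|=1)=1; (T3') limsup_{n→∞}|Π_{τ_n(i)}|=∞ a.s. Moreover, the alternative that occurs is the same for all i∈S. -/
open MeasureTheory ProbabilityTheory Filter
open scoped ENNReal NNReal Topology

noncomputable section

namespace Perpetuities

/-- The positive part of the logarithm, with the convention `log⁺ 0 = 0`. -/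
def logplus (x : ℝ) : ℝ := max (Real.log x) 0

/-- Weak convergence of a sequence of (probability) measures on `ℝ`. -/
def WeakLim (μ : ℕ → Measure ℝ) (ν : Measure ℝ) : Prop :=
  ∀ f : BoundedContinuousFunction ℝ ℝ,
    Tendsto (fun n => ∫ x, f x ∂ μ n) atTop (nhds (∫ x, f x ∂ ν))

/-- `|f n| → ∞` in `μ`-probability. -/
def TendstoInfInMeasure {Ω : Type*} [MeasurableSpace Ω] (μ : Measure Ω) (f : ℕ → Ω → ℝ) : Prop :=
  ∀ x : ℝ, 0 < x → Tendsto (fun n => μ {ω | |f n ω| ≤ x}) atTop (nhds 0)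

/-- `d` is the lattice span (period) of the distribution of the `ℕ`-valued random
variable `T` under `μ`, i.e. `d` is the greatest common divisor of the support. -/
def LatticeSpan {Ω : Type*} [MeasurableSpace Ω] (μ : Measure Ω) (T : Ω → ℕ) (d : ℕ) : Prop :=
  (∀ n, 0 < μ {ω | T ω = n} → d ∣ n) ∧ ∀ e : ℕ, (∀ n, 0 < μ {ω | T ω = n} → e ∣ n) → e ∣ d

/-- The Markov-modulated setting: an ergodic (irreducible, aperiodic, positive recurrent)
Markov chain `M` on a countable state space `S` with transition matrix `p` and stationary
distribution `π`, modulating a sequence `(A_n, B_n)_{n ≥ 1}` of real random pairs (indexed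
here so that `A n`, `B n` are the paper's `A_{n+1}`, `B_{n+1}`): conditionally on the whole
path of the chain, the pairs are independent and the conditional law of `(A_{n+1}, B_{n+1})`
given the path depends only on `(M_n, M_{n+1})`, via the stochastic kernel `K`.
`P i` is the underlying probability measure conditioned on `M 0 = i`. -/
structure MMSetting (S : Type*) (Ω : Type*) [MeasurableSpace S] [MeasurableSingletonClass S]
    [Countable S] [MeasurableSpace Ω] where
  P : S → Measure Ω
  prob : ∀ i, IsProbabilityMeasure (P i)
  π : S → ℝ≥0∞
  πsum : ∑' i, π i = 1
  πpos : ∀ i, 0 < π i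
  p : S → S → ℝ≥0∞
  psum : ∀ i, ∑' j, p i j = 1
  stationary : ∀ j, ∑' i, π i * p i j = π j
  K : S → S → Measure (ℝ × ℝ)
  Kprob : ∀ i j, IsProbabilityMeasure (K i j)
  M : ℕ → Ω → S
  A : ℕ → Ω → ℝ
  B : ℕ → Ω → ℝ
  measM : ∀ n, Measurable (M n)
  measA : ∀ n, Measurable (A n)
  measB : ∀ n, Measurable (B n)
  start : ∀ i, P i {ω | M 0 ω = i} = 1
  chain : ∀ (i : S) (n : ℕ) (path : ℕ → S), path 0 = i →
    P i (⋂ k ∈ Finset.range (n + 1), {ω | M k ω = path k})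
      = ∏ k ∈ Finset.range n, p (path k) (path (k + 1))
  modulated : ∀ (i : S) (n : ℕ) (path : ℕ → S) (E : ℕ → Set (ℝ × ℝ)), path 0 = i →
    (∀ k, MeasurableSet (E k)) →
    P i ((⋂ k ∈ Finset.range (n + 1), {ω | M k ω = path k}) ∩
        ⋂ k ∈ Finset.range n, {ω | (A k ω, B k ω) ∈ E k})
      = P i (⋂ k ∈ Finset.range (n + 1), {ω | M k ω = path k})
        * ∏ k ∈ Finset.range n, K (path k) (path (k + 1)) (E k)
  irreducible : ∀ i j, ∃ n, 0 < P i {ω | M n ω = j}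
  recurrent : ∀ i, P i {ω | ∃ n, 0 < n ∧ M n ω = i} = 1
  posRecurrent : ∀ i, ∫⁻ ω, ((sInf {n | 0 < n ∧ M n ω = i} : ℕ) : ℝ≥0∞) ∂ P i < ⊤
  aperiodic : ∀ (i : S) (d : ℕ), (∀ n, 0 < n → 0 < P i {ω | M n ω = i} → d ∣ n) → d = 1

namespace MMSetting

variable {S : Type*} [MeasurableSpace S] [MeasurableSingletonClass S] [Countable S]
variable {Ω : Type*} [MeasurableSpace Ω]
variable (X : MMSetting S Ω)

/-- `Pπ = ∑ i, π i • P i`, the stationary (unconditional) probability measure. -/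
def Pπ : Measure Ω := Measure.sum fun i => X.π i • X.P i

/-- `Pprod n = Π_n = A_1 ⋯ A_n`, with `Π_0 = 1`. -/
def Pprod (n : ℕ) (ω : Ω) : ℝ := ∏ k ∈ Finset.range n, X.A k ω

/-- `Ssum n = ∑_{k=1}^n Π_{k-1} B_k`, the value `Ψ_1 ∘ ⋯ ∘ Ψ_n (0)` of the backward
iteration started at `0`. -/
def Ssum (n : ℕ) (ω : Ω) : ℝ := ∑ k ∈ Finset.range n, X.Pprod k ω * X.B k ω

/-- `Zb Z n = Ψ_1 ∘ ⋯ ∘ Ψ_n (Z) = Π_n Z + ∑_{k=1}^n Π_{k-1} B_k`, the backward iteration. -/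
def Zb (Z : Ω → ℝ) (n : ℕ) (ω : Ω) : ℝ := X.Pprod n ω * Z ω + X.Ssum n ω

/-- `Zf Z n = Ψ_n ∘ ⋯ ∘ Ψ_1 (Z)`, the forward iteration. -/
def Zf (Z : Ω → ℝ) : ℕ → Ω → ℝ
  | 0 => Z
  | n + 1 => fun ω => X.A n ω * Zf Z n ω + X.B n ω

/-- The perpetuity `Z_∞ = ∑_{n ≥ 1} Π_{n-1} B_n`. -/
def Zinf (ω : Ω) : ℝ := ∑' n, X.Pprod n ω * X.B n ω

/-- `tau i n = τ_n(i)`, the `n`-th return time of the driving chain to the state `i`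
(`τ_0(i) = 0`). -/
def tau (i : S) : ℕ → Ω → ℕ
  | 0 => fun _ => 0
  | n + 1 => fun ω => sInf {k | tau i n ω < k ∧ X.M k ω = i}

/-- `A_1^i = Π_{τ(i)}`. -/
def Ai (i : S) (ω : Ω) : ℝ := X.Pprod (X.tau i 1 ω) ω

/-- `B_1^i = ∑_{k=1}^{τ(i)} Π_{k-1} B_k`. -/
def Bi (i : S) (ω : Ω) : ℝ := X.Ssum (X.tau i 1 ω) ω

/-- `W^i = max_{1 ≤ k ≤ τ(i)} |Π_{k-1} B_k|`. -/
def Wi (i : S) (ω : Ω) : ℝ :=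
  (((Finset.range (X.tau i 1 ω)).sup fun k => ‖X.Pprod k ω * X.B k ω‖₊ : ℝ≥0) : ℝ)

/-- `S_{τ(i)} = - log |Π_{τ(i)}|`. -/
def Stau (i : S) (ω : Ω) : ℝ := - Real.log |X.Ai i ω|

/-- The function `J_i`: `J_i(0) = 1`, and for `x > 0`, `J_i(x) = x / E_i (S_{τ(i)}⁺ ∧ x)`
if `P_i(S_{τ(i)} ≤ 0) < 1`, and `J_i(x) = x` otherwise. -/
def Ji (i : S) (x : ℝ) : ℝ :=
  if x = 0 then 1
  else if X.P i {ω | X.Stau i ω ≤ 0} < 1 then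
    x / ∫ ω, min (max (X.Stau i ω) 0) x ∂ X.P i
  else x

/-- `τ̂(i) = inf {k ≥ 1 : M_k = i, Π_k = 1}`. -/
def hatτ (i : S) (ω : Ω) : ℕ := sInf {k | 0 < k ∧ X.M k ω = i ∧ X.Pprod k ω = 1}

/-- `Z` is an admissible initial value: it is (conditionally on `M 0`, i.e. under each `P i`)
independent of the modulated sequence `(M_n, A_n, B_n)_{n ≥ 1}`. -/
def Admissible (Z : Ω → ℝ) : Prop :=
  Measurable Z ∧
    ∀ i : S, IndepFun Z (fun ω => fun n : ℕ => (X.M (n + 1) ω, X.A n ω, X.B n ω)) (X.P i)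

/-- The degeneracy condition: `A_1 c_{M_1} + B_1 = c_{M_0}` a.s. for the family `c`. -/
def DegenD (c : S → ℝ) : Prop :=
  ∀ᵐ ω ∂ X.Pπ, X.A 0 ω * c (X.M 1 ω) + X.B 0 ω = c (X.M 0 ω)

/-- The dual degeneracy condition: `A_1 c_{M_0} + B_1 = c_{M_1}` a.s. for the family `c`. -/
def DegenDdual (c : S → ℝ) : Prop :=
  ∀ᵐ ω ∂ X.Pπ, X.A 0 ω * c (X.M 0 ω) + X.B 0 ω = c (X.M 1 ω)

end MMSetting

end Perpetuities

namespace Perpetuities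

namespace MMSetting

variable {S : Type*} [MeasurableSpace S] [MeasurableSingletonClass S] [Countable S]
variable {Ω : Type*} [MeasurableSpace Ω] (X : MMSetting S Ω)

/-- Alternative (T1'): `Π_{τ_n(i)} → 0` a.s. -/
def AltT1 (i : S) : Prop :=
  ∀ᵐ ω ∂ X.Pπ, Tendsto (fun n => X.Pprod (X.tau i n ω) ω) atTop (nhds 0)

/-- Alternative (T2'): `P_i(|Π_{τ(i)}| = 1) = 1`. -/
def AltT2 (i : S) : Prop := X.P i {ω | |X.Ai i ω| = 1} = 1

/-- Alternative (T3'): `limsup_n |Π_{τ_n(i)}| = ∞` a.s. (equivalently, the sequence is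
a.s. unbounded). -/
def AltT3 (i : S) : Prop := ∀ᵐ ω ∂ X.Pπ, ∀ C : ℝ, ∃ n, C < |X.Pprod (X.tau i n ω) ω|

end MMSetting

open MMSetting

/-! Decompose the trajectory at the visits of the chain to `i`. The cycles are i.i.d., so
`log |Π_{τ_n(i)}|` is an ordinary random walk, and the events that it tends to `-∞` and that it is
unbounded above have probability `0` or `1`. If neither has probability `1`, its limit superior `L`
is finite and satisfies `L = ξ + L ∘ θ`, where `ξ` is the first step and the remainder `θ` of the
trajectory is independent of `ξ` and distributed as the whole. Hence `μ ∗ ν = ν` for the laws `μ` of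
`ξ` and `ν` of `L`; the characteristic function of `ν` does not vanish near `0`, so that of `μ` is
`1` there, and `ξ = 0`.

To pass from `i` to `j`, look at the walk along the visits to `j` through a function defined by the
visits to `i`. If the cycles at `i` are trivial, the sum `V` of the increments up to the next visit
to `i` satisfies `V = incr + V ∘ shift`, so the cycle sums at `j` form a coboundary and vanish by
the same cancellation. If the walk along `i` is bounded above, its supremum `V` satisfies
`incr + V ∘ shift ≤ V`, and a random walk whose increments are dominated in this way cannot be
almost surely unbounded above. -/

/-! ### Cancelling a convolution -/

section Convolution

open scoped RealInnerProductSpace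

variable {E : Type*} [NormedAddCommGroup E] [InnerProductSpace ℝ E] [MeasurableSpace E]

theorem ae_cexp_eq_one_of_charFun_eq_one {μ : Measure E} [IsProbabilityMeasure μ] {t : E}
    (h : charFun μ t = 1) : ∀ᵐ x ∂μ, Complex.exp (⟪x, t⟫ * Complex.I) = 1 := by
  have h_norm : ∀ᵐ x ∂μ, ‖Complex.exp (⟪x, t⟫ * Complex.I)‖ ≤ 1 :=
    .of_forall fun x => (Complex.norm_exp_ofReal_mul_I _).le
  rw [charFun_apply] at h
  rcases ae_eq_const_or_norm_integral_lt_of_norm_le_const h_norm with h_const | h_lt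
  · simpa [EventuallyEq, average_eq_integral, h] using h_const
  · simp [h] at h_lt

variable [BorelSpace E] [SecondCountableTopology E] [CompleteSpace E]

theorem eq_dirac_zero_of_charFun_eventually_eq_one {μ : Measure E} [IsProbabilityMeasure μ]
    (h : ∀ᶠ t in 𝓝 0, charFun μ t = 1) : μ = Measure.dirac 0 := by
  refine Measure.ext_of_charFun (funext fun t => ?_)
  have h_zero : Tendsto (fun n : ℕ => ((n : ℝ) + 1)⁻¹ • t) atTop (𝓝 0) := by
    simpa using (tendsto_one_div_add_atTop_nhds_zero_nat (𝕜 := ℝ)).smul_const t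
  obtain ⟨n, hn⟩ := (h_zero.eventually h).exists
  have h_one : ∀ᵐ x ∂μ, Complex.exp (⟪x, t⟫ * Complex.I) = 1 := by
    filter_upwards [ae_cexp_eq_one_of_charFun_eq_one hn] with x hx
    have h_scale : (⟪x, t⟫ : ℂ) * Complex.I =
        ((n + 1 : ℕ) : ℂ) * (⟪x, ((n : ℝ) + 1)⁻¹ • t⟫ * Complex.I) := by
      have : (n : ℂ) + 1 ≠ 0 := n.cast_add_one_ne_zero
      rw [real_inner_smul_right]
      push_cast
      field_simp
    rw [h_scale, Complex.exp_nat_mul, hx, one_pow]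
  rw [charFun_apply, integral_congr_ae h_one, charFun_dirac]
  simp

theorem eq_dirac_zero_of_conv_eq_self {μ ν : Measure E} [IsProbabilityMeasure μ]
    [IsProbabilityMeasure ν] (h : μ ∗ ν = ν) : μ = Measure.dirac 0 := by
  refine eq_dirac_zero_of_charFun_eventually_eq_one ?_
  have h_ne : ∀ᶠ t in 𝓝 0, charFun ν t ≠ 0 :=
    continuous_charFun.continuousAt.eventually_ne (by simp)
  filter_upwards [h_ne] with t ht
  exact mul_right_cancel₀ ht (by rw [← charFun_conv, h, one_mul])

end Convolution

/-! ### Birkhoff sums along a renewal decomposition -/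

section TimeChange

variable {T M : Type*} [AddCommMonoid M] {f : T → T} {τ : T → ℕ}

theorem iterate_timeChange (n : ℕ) (x : T) :
    (fun y => f^[τ y] y)^[n] x = f^[birkhoffSum (fun y => f^[τ y] y) τ n x] x := by
  induction n with
  | zero => simp
  | succ n ih =>
    rw [Function.iterate_succ_apply', ih, birkhoffSum_succ, ih, ← Function.iterate_add_apply,
      add_comm]

theorem birkhoffSum_timeChange (g : T → M) (n : ℕ) (x : T) :
    birkhoffSum (fun y => f^[τ y] y) (fun y => birkhoffSum f g (τ y) y) n x =
      birkhoffSum f g (birkhoffSum (fun y => f^[τ y] y) τ n x) x := by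
  induction n with
  | zero => simp
  | succ n ih => rw [birkhoffSum_succ, ih, birkhoffSum_succ, birkhoffSum_add, iterate_timeChange]

theorem measurable_birkhoffSum [MeasurableSpace T] [MeasurableSpace M] [MeasurableAdd₂ M]
    {g : T → M} (hf : Measurable f) (hg : Measurable g) (n : ℕ) :
    Measurable (birkhoffSum f g n) :=
  Finset.measurable_fun_sum _ fun k _ => hg.comp (hf.iterate k)

end TimeChange

section BirkhoffSum

variable {T : Type*} (f : T → T) (g : T → ℝ)

theorem bddAbove_range_birkhoffSum_apply (x : T) :
    BddAbove (Set.range fun n => birkhoffSum f g n (f x)) ↔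
      BddAbove (Set.range fun n => birkhoffSum f g n x) := by
  have h_shift : (fun n => birkhoffSum f g n x) ∘ Nat.succ =
      OrderIso.addLeft (g x) ∘ fun n => birkhoffSum f g n (f x) :=
    funext fun n => birkhoffSum_succ' f g n x
  rw [← Nat.range_of_succ fun n => birkhoffSum f g n x, Set.singleton_union, bddAbove_insert,
    h_shift, Set.range_comp, OrderIso.bddAbove_image]

theorem tendsto_atBot_birkhoffSum_apply (x : T) :
    Tendsto (fun n => birkhoffSum f g n (f x)) atTop atBot ↔
      Tendsto (fun n => birkhoffSum f g n x) atTop atBot := by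
  rw [← tendsto_add_atTop_iff_nat (f := fun n => birkhoffSum f g n x) 1]
  simp only [birkhoffSum_succ']
  exact (OrderIso.addLeft (g x)).tendsto_atBot_iff.symm

variable {f g}

theorem limsup_birkhoffSum_eq_add {x : T}
    (h_bdd : BddAbove (Set.range fun n => birkhoffSum f g n x))
    (h_bot : ¬Tendsto (fun n => birkhoffSum f g n x) atTop atBot) :
    limsup (fun n => birkhoffSum f g n x) atTop =
      g x + limsup (fun n => birkhoffSum f g n (f x)) atTop := by
  rw [← limsup_nat_add _ 1]
  simp only [birkhoffSum_succ']
  refine limsup_const_add _ _ _ ?_ ?_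
  · exact ((bddAbove_range_birkhoffSum_apply f g x).2 h_bdd).isBoundedUnder_of_range
  · rw [← tendsto_atBot_birkhoffSum_apply, tendsto_atBot] at h_bot
    push Not at h_bot
    obtain ⟨b, hb⟩ := h_bot
    exact .of_frequently_ge (hb.mono fun n hn => hn.le)

theorem exists_le_succ_lt_birkhoffSum_iff {c : ℝ} (hc : 0 ≤ c) (N : ℕ) {x : T} :
    (∃ n ≤ N + 1, c < birkhoffSum f g n x) ↔
      ∃ n ≤ N, c - g x < birkhoffSum f g n (f x) := by
  constructor
  · rintro ⟨_ | n, hn, hx⟩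
    · simp [hc.not_gt] at hx
    · exact ⟨n, by lia, sub_lt_iff_lt_add'.2 (birkhoffSum_succ' f g n x ▸ hx)⟩
  · rintro ⟨n, hn, hx⟩
    exact ⟨n + 1, by lia, (birkhoffSum_succ' f g n x).symm ▸ sub_lt_iff_lt_add'.1 hx⟩

end BirkhoffSum

theorem tendsto_measure_natCast_lt {T : Type*} [MeasurableSpace T] {Q : Measure T}
    [IsFiniteMeasure Q] {W : T → ℝ} (hW : Measurable W) :
    Tendsto (fun m : ℕ => Q {x | (m : ℝ) < W x}) atTop (𝓝 0) := by
  have h_empty : ⋂ m : ℕ, {x | (m : ℝ) < W x} = ∅ :=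
    Set.eq_empty_of_forall_notMem fun x hx =>
      have ⟨m, hm⟩ := exists_nat_gt (W x)
      hm.not_gt (Set.mem_iInter.1 hx m)
  rw [← measure_empty (μ := Q), ← h_empty]
  refine tendsto_measure_iInter_atTop
    (fun m => (measurableSet_lt measurable_const hW).nullMeasurableSet)
    (fun m m' hm x (hx : (m' : ℝ) < W x) => ?_) ⟨0, measure_ne_top _ _⟩
  exact (Nat.cast_le.2 hm).trans_lt hx

/-- A decomposition of `x` into a first block `ξ x` of law `μ` and an independent remainder `θ x`
distributed as `x` itself. It makes `ξ, ξ ∘ θ, ξ ∘ θ², …` i.i.d. with law `μ`, hence the Birkhoff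
sums of `ξ` a random walk, while keeping the remainders available as a dynamical system. -/
def IsRenewal {T α : Type*} [MeasurableSpace T] [MeasurableSpace α] (ξ : T → α) (θ : T → T)
    (μ : Measure α) (Q : Measure T) : Prop :=
  MeasurePreserving (fun x => (ξ x, θ x)) Q (μ.prod Q)

namespace IsRenewal

variable {T : Type*} [MeasurableSpace T] {θ : T → T} {Q : Measure T}

section General

variable {α : Type*} [MeasurableSpace α] {ξ : T → α} {μ : Measure α}

theorem measurable_block (h : IsRenewal ξ θ μ Q) : Measurable ξ :=
  measurable_fst.comp h.measurable

theorem measurable_remainder (h : IsRenewal ξ θ μ Q) : Measurable θ :=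
  measurable_snd.comp h.measurable

variable [IsProbabilityMeasure Q]

theorem measurePreserving_block (h : IsRenewal ξ θ μ Q) : MeasurePreserving ξ Q μ :=
  measurePreserving_fst.comp h

theorem measure_inter (h : IsRenewal ξ θ μ Q) {s : Set α} {t : Set T} (hs : MeasurableSet s)
    (ht : MeasurableSet t) : Q (ξ ⁻¹' s ∩ θ ⁻¹' t) = μ s * Q t := by
  rw [← Measure.prod_prod, ← h.measure_preimage (hs.prod ht).nullMeasurableSet]
  rfl

theorem measure_preimage_eq_lintegral (h : IsRenewal ξ θ μ Q) {s : Set (α × T)}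
    (hs : MeasurableSet s) :
    Q {x | (ξ x, θ x) ∈ s} = ∫⁻ a, Q (Prod.mk a ⁻¹' s) ∂μ := by
  rw [← Measure.prod_apply hs, ← h.measure_preimage hs.nullMeasurableSet]
  rfl

theorem measure_forall_lt (h : IsRenewal ξ θ μ Q) (n : ℕ) {t : ℕ → Set α}
    (ht : ∀ k, MeasurableSet (t k)) :
    Q {x | ∀ k < n, ξ (θ^[k] x) ∈ t k} = ∏ k ∈ Finset.range n, μ (t k) := by
  induction n generalizing t with
  | zero => simp
  | succ n ih =>
    have h_split : {x | ∀ k < n + 1, ξ (θ^[k] x) ∈ t k} =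
        ξ ⁻¹' t 0 ∩ θ ⁻¹' {x | ∀ k < n, ξ (θ^[k] x) ∈ t (k + 1)} :=
      Set.ext fun x => Nat.forall_lt_succ_left
    have h_meas : MeasurableSet {x | ∀ k < n, ξ (θ^[k] x) ∈ t (k + 1)} := by
      have hξ := h.measurable_block
      have hθ := h.measurable_remainder
      simp only [Set.ofPred_forall]
      exact .iInter fun k => .iInter fun _ => (hξ.comp (hθ.iterate k)) (ht _)
    rw [h_split, h.measure_inter (ht 0) h_meas, ih fun k => ht (k + 1), Finset.prod_range_succ',
      mul_comm]

variable [IsProbabilityMeasure μ]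

theorem cond (h : IsRenewal ξ θ μ Q) {s : Set T} (hs : MeasurableSet s) (hinv : θ ⁻¹' s = s)
    (h0 : Q s ≠ 0) : IsRenewal ξ θ μ Q[|s] := by
  have := cond_isProbabilityMeasure h0
  refine ⟨h.measurable, (Measure.prod_eq fun a t ha ht => ?_).symm⟩
  have h_inter : s ∩ (fun x => (ξ x, θ x)) ⁻¹' (a ×ˢ t) = ξ ⁻¹' a ∩ θ ⁻¹' (s ∩ t) := by
    rw [Set.preimage_inter, hinv, Set.inter_left_comm]
    rfl
  rw [Measure.map_apply h.measurable (ha.prod ht), cond_apply hs, cond_apply hs, h_inter,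
    h.measure_inter ha (hs.inter ht)]
  ring

theorem map_blocks (h : IsRenewal ξ θ μ Q) :
    Q.map (fun x (k : ℕ) => ξ (θ^[k] x)) = Measure.infinitePi fun _ => μ := by
  classical
  refine Measure.eq_infinitePi _ fun s t ht => ?_
  obtain ⟨n, hn⟩ := s.exists_nat_subset_range
  have h_seq : Measurable fun x (k : ℕ) => ξ (θ^[k] x) :=
    measurable_pi_lambda _ fun k => h.measurable_block.comp (h.measurable_remainder.iterate k)
  have h_cyl : (fun x (k : ℕ) => ξ (θ^[k] x)) ⁻¹' (Set.pi s t) =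
      {x | ∀ k < n, ξ (θ^[k] x) ∈ if k ∈ s then t k else Set.univ} := by
    ext x
    refine ⟨fun hx k _ => ?_, fun hx k hk => ?_⟩
    · split_ifs with hk
      exacts [hx k hk, Set.mem_univ _]
    · simpa [Finset.mem_coe.1 hk] using hx k (Finset.mem_range.1 (hn hk))
  rw [Measure.map_apply h_seq (.pi s.countable_toSet fun k _ => ht k), h_cyl,
    h.measure_forall_lt n fun k => by split_ifs <;> simp [ht]]
  simp [apply_ite μ, Finset.prod_ite_mem, Finset.inter_eq_right.2 hn]

theorem ae_mem_or_ae_notMem_of_invariant (h : IsRenewal ξ θ μ Q) {s : Set (ℕ → α)}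
    (hs : MeasurableSet s)
    (hinv : ∀ x, (fun k : ℕ => ξ (θ^[k] (θ x))) ∈ s ↔ (fun k : ℕ => ξ (θ^[k] x)) ∈ s) :
    (∀ᵐ x ∂Q, (fun k : ℕ => ξ (θ^[k] x)) ∈ s) ∨ ∀ᵐ x ∂Q, (fun k : ℕ => ξ (θ^[k] x)) ∉ s := by
  have h_seq : Measurable fun x (k : ℕ) => ξ (θ^[k] x) :=
    measurable_pi_lambda _ fun k => h.measurable_block.comp (h.measurable_remainder.iterate k)
  set t := (fun x (k : ℕ) => ξ (θ^[k] x)) ⁻¹' s with ht_def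
  have ht : MeasurableSet t := h_seq hs
  refine or_iff_not_imp_right.2 fun h_pos => ?_
  have h0 : Q t ≠ 0 := fun h0 => h_pos (measure_eq_zero_iff_ae_notMem.1 h0)
  have := cond_isProbabilityMeasure h0
  have h_law : Q[|t] t = Q t := by
    rw [ht_def, ← Measure.map_apply h_seq hs, (h.cond ht (Set.ext hinv) h0).map_blocks,
      ← h.map_blocks, Measure.map_apply h_seq hs]
  have h_one : Q t = 1 := by
    rw [← h_law, cond_apply_self h0 (measure_ne_top _ _)]
  exact (mem_ae_iff_prob_eq_one ht).2 h_one

end General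

section Real

variable [IsProbabilityMeasure Q] {ξ : T → ℝ} {μ : Measure ℝ}

/- When the walk first exceeds `c`, at time `n` say, the remainder `θ^[n] x` is still distributed
as `x`, so `-a < W (θ^[n] x)` has the probability of `-a < W x`; and then
`W x ≥ birkhoffSum θ ξ n x + W (θ^[n] x) > c - a`. -/
theorem measure_exists_le_lt_birkhoffSum_mul_le (h : IsRenewal ξ θ μ Q) {W : T → ℝ}
    (hW : Measurable W) (hξ : ∀ᵐ x ∂Q, ξ x + W (θ x) ≤ W x) (a : ℝ) (N : ℕ) (c : ℝ) :
    Q {x | ∃ n ≤ N, c < birkhoffSum θ ξ n x} * Q {x | -a < W x} ≤ Q {x | c - a < W x} := by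
  have hS := measurable_birkhoffSum h.measurable_remainder h.measurable_block
  have h_neg {N : ℕ} {c : ℝ} (hc : c < 0) :
      Q {x | ∃ n ≤ N, c < birkhoffSum θ ξ n x} * Q {x | -a < W x} ≤ Q {x | c - a < W x} :=
    (mul_le_of_le_one_left' prob_le_one).trans <|
      measure_mono fun x (hx : -a < W x) => show c - a < W x by linarith
  induction N generalizing c with
  | zero =>
    rcases lt_or_ge c 0 with hc | hc
    · exact h_neg hc
    · simp [hc.not_gt]
  | succ N ih =>
    rcases lt_or_ge c 0 with hc | hc
    · exact h_neg hc
    have h_first : {x | ∃ n ≤ N + 1, c < birkhoffSum θ ξ n x} =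
        {x | (ξ x, θ x) ∈ {z : ℝ × T | ∃ n ≤ N, c - z.1 < birkhoffSum θ ξ n z.2}} :=
      Set.ext fun x => exists_le_succ_lt_birkhoffSum_iff hc N
    have h_meas : MeasurableSet {z : ℝ × T | ∃ n ≤ N, c - z.1 < birkhoffSum θ ξ n z.2} := by
      simp only [Set.ofPred_exists, Set.ofPred_and]
      refine .iUnion fun n => (MeasurableSet.const (n ≤ N)).inter ?_
      exact measurableSet_lt (measurable_fst.const_sub c) ((hS n).comp measurable_snd)
    calc Q {x | ∃ n ≤ N + 1, c < birkhoffSum θ ξ n x} * Q {x | -a < W x}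
      _ = ∫⁻ r, Q {x | ∃ n ≤ N, c - r < birkhoffSum θ ξ n x} * Q {x | -a < W x} ∂μ := by
        rw [h_first, h.measure_preimage_eq_lintegral h_meas,
          ← lintegral_mul_const _ (measurable_measure_prodMk_left h_meas)]
        rfl
      _ ≤ ∫⁻ r, Q {x | c - r - a < W x} ∂μ := lintegral_mono fun r => ih (c - r)
      _ = Q {x | c - a < ξ x + W (θ x)} := by
        rw [show {x | c - a < ξ x + W (θ x)} =
            {x | (ξ x, θ x) ∈ {z : ℝ × T | c - a < z.1 + W z.2}} from rfl,
          h.measure_preimage_eq_lintegral (measurableSet_lt (by fun_prop) (by fun_prop))]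
        simp only [Set.preimage_ofPred_eq, sub_lt_iff_lt_add', sub_right_comm]
      _ ≤ Q {x | c - a < W x} := measure_mono_ae <| by
        filter_upwards [hξ] with x hx hlt using lt_of_lt_of_le hlt hx

theorem not_ae_not_bddAbove_of_add_le (h : IsRenewal ξ θ μ Q) {W : T → ℝ} (hW : Measurable W)
    (hξ : ∀ᵐ x ∂Q, ξ x + W (θ x) ≤ W x) :
    ¬∀ᵐ x ∂Q, ¬BddAbove (Set.range fun n => birkhoffSum θ ξ n x) := by
  intro h_unbdd
  have h_le (a c : ℝ) : Q {x | -a < W x} ≤ Q {x | c - a < W x} := by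
    have h_mono : Monotone fun N : ℕ => {x | ∃ n ≤ N, c < birkhoffSum θ ξ n x} :=
      fun N N' hN x ⟨n, hn, hx⟩ => ⟨n, hn.trans hN, hx⟩
    have h_univ : Q (⋃ N : ℕ, {x | ∃ n ≤ N, c < birkhoffSum θ ξ n x}) = 1 := by
      rw [measure_congr (eventuallyEq_univ.2 _), measure_univ]
      filter_upwards [h_unbdd] with x hx
      obtain ⟨_, ⟨n, rfl⟩, hn⟩ := not_bddAbove_iff.1 hx c
      exact Set.mem_iUnion.2 ⟨n, n, le_rfl, hn⟩
    calc Q {x | -a < W x}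
      _ = ⨆ N : ℕ, Q {x | ∃ n ≤ N, c < birkhoffSum θ ξ n x} * Q {x | -a < W x} := by
        rw [← ENNReal.iSup_mul, ← h_mono.measure_iUnion, h_univ, one_mul]
      _ ≤ Q {x | c - a < W x} :=
        iSup_le fun N => h.measure_exists_le_lt_birkhoffSum_mul_le hW hξ a N c
  obtain ⟨n, hn⟩ : ∃ n : ℕ, 0 < Q {x | -(n : ℝ) < W x} := by
    refine exists_measure_pos_of_not_measure_iUnion_null ?_
    have h_univ : ⋃ n : ℕ, {x | -(n : ℝ) < W x} = Set.univ :=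
      Set.iUnion_eq_univ_iff.2 fun x =>
        (exists_nat_gt (-W x)).imp fun n hn => neg_lt.1 hn
    simp [h_univ]
  refine hn.not_ge (ge_of_tendsto' (tendsto_measure_natCast_lt (Q := Q) hW) fun m => ?_)
  simpa using h_le n (m + n)

variable [IsProbabilityMeasure μ]

theorem ae_eq_zero_of_coboundary (h : IsRenewal ξ θ μ Q) {L : T → ℝ} (hL : Measurable L)
    (hξ : ∀ᵐ x ∂Q, L x = ξ x + L (θ x)) : ∀ᵐ x ∂Q, ξ x = 0 := by
  suffices μ = Measure.dirac 0 by
    refine h.measurePreserving_block.quasiMeasurePreserving.ae (p := (· = 0)) ?_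
    simp [this, ae_dirac_eq]
  have := Measure.isProbabilityMeasure_map (μ := Q) hL.aemeasurable
  refine eq_dirac_zero_of_conv_eq_self (ν := Q.map L) ?_
  have h_pair : MeasurePreserving (fun x => (ξ x, L (θ x))) Q (μ.prod (Q.map L)) :=
    ((MeasurePreserving.id μ).prod ⟨hL, rfl⟩).comp h
  rw [Measure.conv, ← h_pair.map_eq, Measure.map_map (by fun_prop) h_pair.measurable]
  exact (Measure.map_congr hξ).symm

theorem ae_eq_zero_or_tendsto_atBot_or_not_bddAbove (h : IsRenewal ξ θ μ Q) :
    (∀ᵐ x ∂Q, ξ x = 0) ∨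
    (∀ᵐ x ∂Q, Tendsto (fun n => birkhoffSum θ ξ n x) atTop atBot) ∨
    ∀ᵐ x ∂Q, ¬BddAbove (Set.range fun n => birkhoffSum θ ξ n x) := by
  have hS := measurable_birkhoffSum h.measurable_remainder h.measurable_block
  have h_bdd : (∀ᵐ x ∂Q, BddAbove (Set.range fun n => birkhoffSum θ ξ n x)) ∨
      ∀ᵐ x ∂Q, ¬BddAbove (Set.range fun n => birkhoffSum θ ξ n x) :=
    h.ae_mem_or_ae_notMem_of_invariant
      (s := {y | BddAbove (Set.range fun n => ∑ k ∈ Finset.range n, y k)})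
      (measurableSet_bddAbove_range fun n => by fun_prop)
      fun x => bddAbove_range_birkhoffSum_apply θ ξ x
  rcases h_bdd with h_bdd | h_unbdd
  swap
  · exact .inr (.inr h_unbdd)
  have h_bot : (∀ᵐ x ∂Q, Tendsto (fun n => birkhoffSum θ ξ n x) atTop atBot) ∨
      ∀ᵐ x ∂Q, ¬Tendsto (fun n => birkhoffSum θ ξ n x) atTop atBot :=
    h.ae_mem_or_ae_notMem_of_invariant
      (s := {y | Tendsto (fun n => ∑ k ∈ Finset.range n, y k) atTop atBot})
      (measurableSet_tendsto atBot fun n => by fun_prop)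
      fun x => tendsto_atBot_birkhoffSum_apply θ ξ x
  rcases h_bot with h_bot | h_not_bot
  · exact .inr (.inl h_bot)
  · refine .inl (h.ae_eq_zero_of_coboundary (.limsup hS) ?_)
    filter_upwards [h_bdd, h_not_bot] with x hx_bdd hx_bot
    exact limsup_birkhoffSum_eq_add hx_bdd hx_bot

end Real

end IsRenewal

/-! ### Markov random walks -/

theorem measure_eq_tsum_fiber_and {Ω ι : Type*} [MeasurableSpace Ω] [MeasurableSpace ι]
    [MeasurableSingletonClass ι] [Countable ι] (μ : Measure Ω) {f : Ω → ι} (hf : Measurable f)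
    {s : Set Ω} (hs : MeasurableSet s) : μ s = ∑' i, μ {x | f x = i ∧ x ∈ s} := by
  have h_union : s = ⋃ i, {x | f x = i ∧ x ∈ s} := by
    ext x
    simp
  conv_lhs => rw [h_union]
  exact measure_iUnion
    (fun i j hij => Set.disjoint_left.2 fun x hi hj => hij (hi.1.symm.trans hj.1))
    fun i => (hf (measurableSet_singleton i)).inter hs

/-- A random walk modulated by an irreducible recurrent Markov chain, in additive form: under
`law i` the driving chain `state x, state (shift x), state (shift^[2] x), …` starts at `i`, and
`incr x, incr (shift x), …` are the increments. Given the state `j` after one step, the shifted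
trajectory is independent of the first increment and has law `law j`. -/
structure MarkovRandomWalk (S T : Type*) [MeasurableSpace S] [MeasurableSpace T] where
  law : S → Measure T
  isProbabilityMeasure_law : ∀ i, IsProbabilityMeasure (law i)
  state : T → S
  incr : T → ℝ
  shift : T → T
  measurable_state : Measurable state
  measurable_incr : Measurable incr
  measurable_shift : Measurable shift
  ae_state_eq : ∀ i, ∀ᵐ x ∂law i, state x = i
  markov : ∀ i j,
    ((law i).restrict {x | state (shift x) = j}).map (fun x => (incr x, shift x)) =
      (((law i).restrict {x | state (shift x) = j}).map incr).prod (law j)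
  irreducible : ∀ i j, ∃ n, law i {x | state (shift^[n] x) = j} ≠ 0
  recurrent : ∀ i, ∀ᵐ x ∂law i, ∃ n, 0 < n ∧ state (shift^[n] x) = i

namespace MarkovRandomWalk

variable {S T : Type*} [MeasurableSpace S] [MeasurableSpace T] (W : MarkovRandomWalk S T)

instance (i : S) : IsProbabilityMeasure (W.law i) := W.isProbabilityMeasure_law i

section MarkovProperty

/-- The law of the first increment on the event that the chain steps from `i` to `j`
(a measure of total mass the transition probability). -/
def stepLaw (i j : S) : Measure ℝ :=
  ((W.law i).restrict {x | W.state (W.shift x) = j}).map W.incr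

instance (i j : S) : IsFiniteMeasure (W.stepLaw i j) := by
  unfold stepLaw
  infer_instance

theorem law_state_shift_eq_and (i j : S) {s : Set (ℝ × T)} (hs : MeasurableSet s) :
    W.law i {x | W.state (W.shift x) = j ∧ (W.incr x, W.shift x) ∈ s} =
      ∫⁻ a, W.law j (Prod.mk a ⁻¹' s) ∂W.stepLaw i j := by
  have h_pair := W.measurable_incr.prodMk W.measurable_shift
  rw [← Measure.prod_apply hs, stepLaw, ← W.markov, Measure.map_apply h_pair hs,
    Measure.restrict_apply (h_pair hs), Set.inter_comm]
  rfl

variable [MeasurableSingletonClass S]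

theorem measurableSet_state_iterate_eq (n : ℕ) (j : S) :
    MeasurableSet {x | W.state (W.shift^[n] x) = j} :=
  W.measurable_state.comp (W.measurable_shift.iterate n) (measurableSet_singleton j)

theorem measurableSet_frequently_state_eq (i : S) :
    MeasurableSet {x | ∃ᶠ n in atTop, W.state (W.shift^[n] x) = i} := by
  simp only [frequently_atTop', Set.ofPred_forall, Set.ofPred_exists, Set.ofPred_and]
  exact .iInter fun a => .iUnion fun b =>
    (MeasurableSet.const (b > a)).inter (W.measurableSet_state_iterate_eq b i)

variable [Countable S]

theorem law_eq_tsum_of_first_step (i : S) {s : Set (ℝ × T)} (hs : MeasurableSet s) :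
    W.law i {x | (W.incr x, W.shift x) ∈ s} =
      ∑' j, ∫⁻ a, W.law j (Prod.mk a ⁻¹' s) ∂W.stepLaw i j := by
  simp only [← W.law_state_shift_eq_and i _ hs]
  exact measure_eq_tsum_fiber_and _ (W.measurable_state.comp W.measurable_shift)
    (W.measurable_incr.prodMk W.measurable_shift hs)

theorem law_first_step_eq_mul {s t : Set (ℝ × T)} (hs : MeasurableSet s) (ht : MeasurableSet t)
    {c : ℝ≥0∞} (h : ∀ j a, W.law j (Prod.mk a ⁻¹' s) = W.law j (Prod.mk a ⁻¹' t) * c) (i : S) :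
    W.law i {x | (W.incr x, W.shift x) ∈ s} = W.law i {x | (W.incr x, W.shift x) ∈ t} * c := by
  rw [W.law_eq_tsum_of_first_step i hs, W.law_eq_tsum_of_first_step i ht,
    ← ENNReal.tsum_mul_right]
  refine tsum_congr fun j => ?_
  rw [← lintegral_mul_const c (measurable_measure_prodMk_left ht)]
  exact lintegral_congr fun a => h j a

theorem law_state_iterate_eq_and (i j : S) (n : ℕ) {s : Set T} (hs : MeasurableSet s) :
    W.law i {x | W.state (W.shift^[n] x) = j ∧ W.shift^[n] x ∈ s} =
      W.law i {x | W.state (W.shift^[n] x) = j} * W.law j s := by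
  induction n generalizing i with
  | zero =>
    simp only [Function.iterate_zero, id]
    rcases eq_or_ne i j with rfl | hij
    · have h_one : W.law i {x | W.state x = i} = 1 :=
        (mem_ae_iff_prob_eq_one (W.measurableSet_state_iterate_eq 0 i)).1 (W.ae_state_eq i)
      rw [h_one, one_mul]
      exact measure_congr ((W.ae_state_eq i).mono fun x hx => propext (and_iff_right hx))
    · have h_null : W.law i {x | W.state x = j} = 0 :=
        measure_eq_zero_iff_ae_notMem.2
          ((W.ae_state_eq i).mono fun x hi hj => hij (hi.symm.trans hj))
      rw [h_null, zero_mul]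
      exact measure_mono_null (fun x hx => hx.1) h_null
  | succ n ih =>
    have h_state := W.measurableSet_state_iterate_eq n j
    exact W.law_first_step_eq_mul
      (measurable_snd (h_state.inter (W.measurable_shift.iterate n hs)))
      (measurable_snd h_state) (fun k _ => ih k) i

theorem map_restrict_iterate_shift (i j : S) (n : ℕ) :
    ((W.law i).restrict {x | W.state (W.shift^[n] x) = j}).map W.shift^[n] =
      W.law i {x | W.state (W.shift^[n] x) = j} • W.law j := by
  ext s hs
  have h_shift := W.measurable_shift.iterate n
  rw [Measure.map_apply h_shift hs, Measure.restrict_apply (h_shift hs), Set.inter_comm]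
  exact W.law_state_iterate_eq_and i j n hs

variable {p : T → Prop}

theorem ae_iterate_shift_of_ae {j : S} (h : ∀ᵐ x ∂W.law j, p x) (i : S) (n : ℕ) :
    ∀ᵐ x ∂W.law i, W.state (W.shift^[n] x) = j → p (W.shift^[n] x) := by
  refine (ae_restrict_iff' (W.measurableSet_state_iterate_eq n j)).1 ?_
  refine ae_of_ae_map (W.measurable_shift.iterate n).aemeasurable ?_
  rw [W.map_restrict_iterate_shift]
  exact Measure.ae_smul_measure h _

theorem ae_forall_iterate_shift (h : ∀ i, ∀ᵐ x ∂W.law i, p x) (i : S) :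
    ∀ᵐ x ∂W.law i, ∀ n, p (W.shift^[n] x) :=
  ae_all_iff.2 fun n => (ae_all_iff.2 fun j => W.ae_iterate_shift_of_ae (h j) i n).mono
    fun _ hx => hx _ rfl

theorem ae_of_ae_iterate_shift {i j : S} {n : ℕ}
    (hij : W.law i {x | W.state (W.shift^[n] x) = j} ≠ 0) (hp : MeasurableSet {x | p x})
    (h : ∀ᵐ x ∂W.law i, p (W.shift^[n] x)) : ∀ᵐ x ∂W.law j, p x := by
  rw [← Measure.ae_ennreal_smul_measure_iff hij, ← W.map_restrict_iterate_shift,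
    ae_map_iff (W.measurable_shift.iterate n).aemeasurable hp]
  exact ae_restrict_of_ae h

theorem ae_frequently_state_eq (i j : S) :
    ∀ᵐ x ∂W.law j, ∃ᶠ n in atTop, W.state (W.shift^[n] x) = i := by
  have h_self : ∀ᵐ x ∂W.law i, ∃ᶠ n in atTop, W.state (W.shift^[n] x) = i := by
    have h_next := ae_all_iff.2 (W.ae_iterate_shift_of_ae (W.recurrent i) i)
    filter_upwards [W.ae_state_eq i, h_next] with x hx hx_next
    refine frequently_atTop'.2 fun n => ?_
    induction n with
    | zero => exact hx_next 0 hx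
    | succ n ih =>
      obtain ⟨m, hnm, hm⟩ := ih
      obtain ⟨k, hk, hmk⟩ := hx_next m hm
      exact ⟨k + m, by lia, by rwa [Function.iterate_add_apply]⟩
  obtain ⟨n, hn⟩ := W.irreducible i j
  refine W.ae_of_ae_iterate_shift hn (W.measurableSet_frequently_state_eq i) ?_
  filter_upwards [h_self] with x hx
  refine frequently_atTop'.2 fun m => ?_
  obtain ⟨k, hk, hki⟩ := frequently_atTop'.1 hx (m + n)
  refine ⟨k - n, by lia, ?_⟩
  rwa [← Function.iterate_add_apply, Nat.sub_add_cancel (by lia)]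

end MarkovProperty

end MarkovRandomWalk

/-! ### Cycles between visits to a state -/

theorem measurable_sInf_nat {T : Type*} [MeasurableSpace T] {p : T → ℕ → Prop}
    (hp : ∀ n, MeasurableSet {x | p x n}) : Measurable fun x => sInf {n | p x n} := by
  refine measurable_of_Iic fun n => ?_
  have h_le : (fun x => sInf {k | p x k}) ⁻¹' Set.Iic n =
      {x | ∃ k, p x k}ᶜ ∪ {x | ∃ k ≤ n, p x k} := by
    ext x
    rcases Set.eq_empty_or_nonempty {k | p x k} with h_empty | h_ne
    · exact iff_of_true (by simp [h_empty]) (.inl (Set.not_nonempty_iff_eq_empty.2 h_empty))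
    · refine ⟨fun hx => .inr ⟨_, hx, Nat.sInf_mem h_ne⟩, ?_⟩
      rintro (hx | ⟨k, hk, hpk⟩)
      exacts [absurd h_ne hx, (Nat.sInf_le hpk).trans hk]
  rw [h_le]
  simp only [Set.ofPred_exists, Set.ofPred_and]
  exact (MeasurableSet.iUnion hp).compl.union
    (.iUnion fun k => (MeasurableSet.const (k ≤ n)).inter (hp k))

namespace MarkovRandomWalk

variable {S T : Type*} [MeasurableSpace S] [MeasurableSpace T] (W : MarkovRandomWalk S T)

section Cycles

/-- The first positive time `τ(i)` at which the chain visits `i` (`0` if there is none). -/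
def returnTime (i : S) (x : T) : ℕ := sInf {n | 0 < n ∧ W.state (W.shift^[n] x) = i}

/-- The trajectory from the time `τ(i)` on. -/
def returnMap (i : S) (x : T) : T := W.shift^[W.returnTime i x] x

/-- The sum of the increments up to the time `τ(i)`. -/
def cycleSum (i : S) (x : T) : ℝ := birkhoffSum W.shift W.incr (W.returnTime i x) x

/-- The random walk sampled at the successive visits to `i`. -/
def embeddedWalk (i : S) (n : ℕ) (x : T) : ℝ := birkhoffSum (W.returnMap i) (W.cycleSum i) n x

variable {W} {i : S} {x : T}

theorem returnTime_of_state_shift_eq (h : W.state (W.shift x) = i) : W.returnTime i x = 1 :=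
  have h_mem : 1 ∈ {n | 0 < n ∧ W.state (W.shift^[n] x) = i} := ⟨one_pos, h⟩
  (Nat.sInf_le h_mem).antisymm (Nat.sInf_mem ⟨1, h_mem⟩).1

theorem returnMap_of_state_shift_eq (h : W.state (W.shift x) = i) :
    W.returnMap i x = W.shift x := by
  rw [returnMap, returnTime_of_state_shift_eq h, Function.iterate_one]

theorem cycleSum_of_state_shift_eq (h : W.state (W.shift x) = i) :
    W.cycleSum i x = W.incr x := by
  rw [cycleSum, returnTime_of_state_shift_eq h, birkhoffSum_one]

theorem returnTime_of_state_shift_ne (h_ne : W.state (W.shift x) ≠ i)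
    (h_ret : ∃ n, 0 < n ∧ W.state (W.shift^[n] (W.shift x)) = i) :
    W.returnTime i x = W.returnTime i (W.shift x) + 1 := by
  have h_mem : sInf {n | 0 < n ∧ W.state (W.shift^[n] x) = i} ∈ _ :=
    Nat.sInf_mem (h_ret.imp' (· + 1) fun n hn => ⟨n.succ_pos, hn.2⟩)
  refine (Nat.sInf_add h_mem.1).symm.trans (congrArg (sInf · + 1) (Set.ext fun n => ?_))
  refine and_congr_left fun (hn : W.state (W.shift^[n] (W.shift x)) = i) =>
    iff_of_true n.succ_pos (n.pos_of_ne_zero ?_)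
  rintro rfl
  exact h_ne hn

theorem returnMap_of_state_shift_ne (h_ne : W.state (W.shift x) ≠ i)
    (h_ret : ∃ n, 0 < n ∧ W.state (W.shift^[n] (W.shift x)) = i) :
    W.returnMap i x = W.returnMap i (W.shift x) := by
  rw [returnMap, returnTime_of_state_shift_ne h_ne h_ret, Function.iterate_succ_apply, returnMap]

theorem cycleSum_of_state_shift_ne (h_ne : W.state (W.shift x) ≠ i)
    (h_ret : ∃ n, 0 < n ∧ W.state (W.shift^[n] (W.shift x)) = i) :
    W.cycleSum i x = W.incr x + W.cycleSum i (W.shift x) := by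
  rw [cycleSum, returnTime_of_state_shift_ne h_ne h_ret, birkhoffSum_succ', cycleSum]

variable (W i)

/-- The event that the first cycle has length `n`, sum in `s` and is followed by a trajectory
in `t`. -/
def cycleEvent (n : ℕ) (s : Set ℝ) (t : Set T) : Set T :=
  {x | W.returnTime i x = n ∧ W.cycleSum i x ∈ s ∧ W.returnMap i x ∈ t}

/-- The event `cycleEvent i (n + 1) s t` in terms of the first increment and of the trajectory
after the first step. -/
def firstStepCycleEvent (n : ℕ) (s : Set ℝ) (t : Set T) : Set (ℝ × T) :=
  {z | W.state z.2 = i ∧ n = 0 ∧ z.1 ∈ s ∧ z.2 ∈ t ∨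
    W.state z.2 ≠ i ∧ z.2 ∈ W.cycleEvent i n ((z.1 + ·) ⁻¹' s) t}

variable {W i} in
theorem mem_cycleEvent_succ_iff (h_ret : ∃ n, 0 < n ∧ W.state (W.shift^[n] (W.shift x)) = i)
    {n : ℕ} {s : Set ℝ} {t : Set T} :
    x ∈ W.cycleEvent i (n + 1) s t ↔ (W.incr x, W.shift x) ∈ W.firstStepCycleEvent i n s t := by
  by_cases hx : W.state (W.shift x) = i
  · simp [cycleEvent, firstStepCycleEvent, hx, returnTime_of_state_shift_eq,
      cycleSum_of_state_shift_eq, returnMap_of_state_shift_eq, eq_comm]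
  · simp [cycleEvent, firstStepCycleEvent, hx, returnTime_of_state_shift_ne hx h_ret,
      cycleSum_of_state_shift_ne hx h_ret, returnMap_of_state_shift_ne hx h_ret]

variable [MeasurableSingletonClass S]

theorem measurable_returnTime : Measurable (W.returnTime i) :=
  measurable_sInf_nat fun n => (MeasurableSet.const (0 < n)).inter
    (W.measurableSet_state_iterate_eq n i)

theorem measurable_returnMap : Measurable (W.returnMap i) :=
  (measurable_from_prod_countable_right (f := fun z : ℕ × T => W.shift^[z.1] z.2) fun n =>
    W.measurable_shift.iterate n).comp ((W.measurable_returnTime i).prodMk measurable_id)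

theorem measurable_cycleSum : Measurable (W.cycleSum i) :=
  (measurable_from_prod_countable_right (f := fun z : ℕ × T => birkhoffSum W.shift W.incr z.1 z.2)
    fun n => measurable_birkhoffSum W.measurable_shift W.measurable_incr n).comp
      ((W.measurable_returnTime i).prodMk measurable_id)

instance (j : S) : IsProbabilityMeasure ((W.law j).map (W.cycleSum i)) :=
  Measure.isProbabilityMeasure_map (W.measurable_cycleSum i).aemeasurable

theorem measurable_embeddedWalk (n : ℕ) : Measurable (W.embeddedWalk i n) :=
  measurable_birkhoffSum (W.measurable_returnMap i) (W.measurable_cycleSum i) n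

variable {s : Set ℝ} {t : Set T}

theorem measurableSet_firstStepCycleEvent (n : ℕ) (hs : MeasurableSet s) (ht : MeasurableSet t) :
    MeasurableSet (W.firstStepCycleEvent i n s t) := by
  have h_snd : Measurable (Prod.snd : ℝ × T → T) := measurable_snd
  have h_state : MeasurableSet {z : ℝ × T | W.state z.2 = i} :=
    (W.measurable_state.comp h_snd) (measurableSet_singleton i)
  have h_time := (W.measurable_returnTime i).comp h_snd
  have h_sum := measurable_fst.add ((W.measurable_cycleSum i).comp h_snd)
  have h_map := (W.measurable_returnMap i).comp h_snd
  exact (h_state.inter ((MeasurableSet.const (n = 0)).inter (hs.prod ht))).union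
    (h_state.compl.inter ((h_time (measurableSet_singleton n)).inter ((h_sum hs).inter (h_map ht))))

variable [Countable S]

theorem ae_forall_exists_return (j : S) :
    ∀ᵐ x ∂W.law j, ∀ k, ∃ n, 0 < n ∧ W.state (W.shift^[n] (W.shift^[k] x)) = i :=
  W.ae_forall_iterate_shift
    (fun j => (W.ae_frequently_state_eq i j).mono fun _ hx => frequently_atTop'.1 hx 0) j

theorem law_cycleEvent_zero (j : S) : W.law j (W.cycleEvent i 0 s t) = 0 := by
  refine measure_eq_zero_iff_ae_notMem.2 ((W.ae_forall_exists_return i j).mono fun x hx h => ?_)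
  have h_pos : 0 < W.returnTime i x := (Nat.sInf_mem (hx 0)).1
  exact h_pos.ne' h.1

theorem law_cycleEvent_succ (j : S) (n : ℕ) :
    W.law j (W.cycleEvent i (n + 1) s t) =
      W.law j {x | (W.incr x, W.shift x) ∈ W.firstStepCycleEvent i n s t} :=
  measure_congr ((W.ae_forall_exists_return i j).mono fun _ hx =>
    propext (mem_cycleEvent_succ_iff (hx 1)))

theorem law_cycleEvent_eq_mul (j : S) (n : ℕ) (hs : MeasurableSet s) (ht : MeasurableSet t) :
    W.law j (W.cycleEvent i n s t) = W.law j (W.cycleEvent i n s Set.univ) * W.law i t := by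
  induction n generalizing j s with
  | zero => simp only [law_cycleEvent_zero, zero_mul]
  | succ n ih =>
    rw [law_cycleEvent_succ, law_cycleEvent_succ]
    refine W.law_first_step_eq_mul (W.measurableSet_firstStepCycleEvent i n hs ht)
      (W.measurableSet_firstStepCycleEvent i n hs .univ) (fun k a => ?_) j
    by_cases hk : k = i
    · subst hk
      have h_fst (t : Set T) : W.law k (Prod.mk a ⁻¹' W.firstStepCycleEvent k n s t) =
          W.law k {y | n = 0 ∧ a ∈ s ∧ y ∈ t} := by
        refine measure_congr ((W.ae_state_eq k).mono fun y hy => propext ?_)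
        exact (or_iff_left fun h => h.1 hy).trans (and_iff_right hy)
      rw [h_fst, h_fst]
      by_cases h : n = 0 ∧ a ∈ s <;> simp [← and_assoc, h]
    · have h_snd (t : Set T) : W.law k (Prod.mk a ⁻¹' W.firstStepCycleEvent i n s t) =
          W.law k (W.cycleEvent i n ((a + ·) ⁻¹' s) t) := by
        refine measure_congr ((W.ae_state_eq k).mono fun y hy => propext ?_)
        have hyi : W.state y ≠ i := hy ▸ hk
        exact (or_iff_right fun h => hyi h.1).trans (and_iff_right hyi)
      rw [h_snd, h_snd, ih k (measurable_const_add a hs)]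

theorem map_cycleSum_returnMap (j : S) :
    (W.law j).map (fun x => (W.cycleSum i x, W.returnMap i x)) =
      ((W.law j).map (W.cycleSum i)).prod (W.law i) := by
  have hF := W.measurable_cycleSum i
  have hR := W.measurable_returnMap i
  refine (Measure.prod_eq fun s t hs ht => ?_).symm
  rw [Measure.map_apply (hF.prodMk hR) (hs.prod ht), Measure.map_apply hF hs,
    measure_eq_tsum_fiber_and _ (W.measurable_returnTime i) (hF.prodMk hR (hs.prod ht)),
    measure_eq_tsum_fiber_and _ (W.measurable_returnTime i) (hF hs), ← ENNReal.tsum_mul_right]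
  simpa [cycleEvent] using tsum_congr fun n => W.law_cycleEvent_eq_mul i j n hs ht

theorem isRenewal_cycleSum :
    IsRenewal (W.cycleSum i) (W.returnMap i) ((W.law i).map (W.cycleSum i)) (W.law i) :=
  ⟨(W.measurable_cycleSum i).prodMk (W.measurable_returnMap i), W.map_cycleSum_returnMap i i⟩

theorem map_returnMap (j : S) : (W.law j).map (W.returnMap i) = W.law i := by
  have hF := W.measurable_cycleSum i
  have h_snd := congrArg Measure.snd (W.map_cycleSum_returnMap i j)
  rwa [Measure.snd_map_prodMk hF, Measure.snd_prod] at h_snd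

theorem ae_returnMap {p : T → Prop} (h : ∀ᵐ x ∂W.law i, p x) (j : S) :
    ∀ᵐ x ∂W.law j, p (W.returnMap i x) :=
  ae_of_ae_map (W.measurable_returnMap i).aemeasurable (W.map_returnMap i j ▸ h)

end Cycles

end MarkovRandomWalk

/-! ### The trichotomy for Markov random walks -/

section Coboundary

variable {T : Type*} {f : T → T} {g V : T → ℝ} {x : T}

theorem birkhoffSum_add_le_of_forall (h : ∀ n, g (f^[n] x) + V (f (f^[n] x)) ≤ V (f^[n] x))
    (n : ℕ) : birkhoffSum f g n x + V (f^[n] x) ≤ V x := by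
  induction n with
  | zero => simp
  | succ n ih =>
    rw [birkhoffSum_succ, Function.iterate_succ_apply']
    linarith [h n]

theorem eq_birkhoffSum_add_of_forall (h : ∀ n, V (f^[n] x) = g (f^[n] x) + V (f (f^[n] x)))
    (n : ℕ) : V x = birkhoffSum f g n x + V (f^[n] x) := by
  induction n with
  | zero => simp
  | succ n ih =>
    rw [birkhoffSum_succ, Function.iterate_succ_apply', ih, h n]
    ring

end Coboundary

namespace MarkovRandomWalk

variable {S T : Type*} [MeasurableSpace S] [MeasurableSpace T] (W : MarkovRandomWalk S T)

section Alternatives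

/-- The walk sampled at the visits to `i` tends to `-∞` almost surely, for every initial state. -/
def DriftsToBot (i : S) : Prop :=
  ∀ j, ∀ᵐ x ∂W.law j, Tendsto (fun n => W.embeddedWalk i n x) atTop atBot

/-- Almost surely, the increments over a cycle from `i` to `i` add up to zero. -/
def HasTrivialCycles (i : S) : Prop := ∀ᵐ x ∂W.law i, W.cycleSum i x = 0

/-- The walk sampled at the visits to `i` is unbounded above almost surely, for every initial
state. -/
def IsUnbounded (i : S) : Prop :=
  ∀ j, ∀ᵐ x ∂W.law j, ¬BddAbove (Set.range fun n => W.embeddedWalk i n x)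

variable {W} {i j : S}

theorem exists_embeddedWalk_succ_eq_incr_add {x : T}
    (h_ret : ∃ n, 0 < n ∧ W.state (W.shift^[n] (W.shift x)) = i) (n : ℕ) :
    ∃ m, W.embeddedWalk i (m + 1) x = W.incr x + W.embeddedWalk i (n + 1) (W.shift x) := by
  by_cases hx : W.state (W.shift x) = i
  · refine ⟨n + 1, ?_⟩
    rw [embeddedWalk, birkhoffSum_succ', cycleSum_of_state_shift_eq hx,
      returnMap_of_state_shift_eq hx, embeddedWalk]
  · refine ⟨n, ?_⟩
    rw [embeddedWalk, birkhoffSum_succ', cycleSum_of_state_shift_ne hx h_ret,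
      returnMap_of_state_shift_ne hx h_ret, embeddedWalk, birkhoffSum_succ', add_assoc]

theorem incr_add_iSup_embeddedWalk_le {x : T}
    (h_ret : ∃ n, 0 < n ∧ W.state (W.shift^[n] (W.shift x)) = i)
    (h_bdd : BddAbove (Set.range fun n => W.embeddedWalk i n x)) :
    W.incr x + ⨆ n, W.embeddedWalk i (n + 1) (W.shift x) ≤ ⨆ n, W.embeddedWalk i (n + 1) x := by
  rw [← le_sub_iff_add_le']
  refine ciSup_le fun n => le_sub_iff_add_le'.2 ?_
  obtain ⟨m, hm⟩ := exists_embeddedWalk_succ_eq_incr_add h_ret n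
  have h_bdd_succ : BddAbove (Set.range fun n => W.embeddedWalk i (n + 1) x) :=
    h_bdd.mono (Set.range_comp_subset_range (· + 1) fun n => W.embeddedWalk i n x)
  exact hm ▸ le_ciSup h_bdd_succ m

theorem DriftsToBot.ae_bddAbove (h : W.DriftsToBot i) (j : S) :
    ∀ᵐ x ∂W.law j, BddAbove (Set.range fun n => W.embeddedWalk i n x) :=
  (h j).mono fun _ hx => bddAbove_range_of_tendsto_atTop_atBot hx

variable [MeasurableSingletonClass S] [Countable S]

theorem ae_cycleSum_add_le {V : T → ℝ}
    (hV : ∀ k, ∀ᵐ x ∂W.law k, W.incr x + V (W.shift x) ≤ V x) (i j : S) :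
    ∀ᵐ x ∂W.law j, W.cycleSum i x + V (W.returnMap i x) ≤ V x :=
  (W.ae_forall_iterate_shift hV j).mono fun _ hx => birkhoffSum_add_le_of_forall hx _

theorem ae_eq_cycleSum_add {V : T → ℝ}
    (hV : ∀ k, ∀ᵐ x ∂W.law k, V x = W.incr x + V (W.shift x)) (i j : S) :
    ∀ᵐ x ∂W.law j, V x = W.cycleSum i x + V (W.returnMap i x) :=
  (W.ae_forall_iterate_shift hV j).mono fun _ hx => eq_birkhoffSum_add_of_forall hx _

theorem not_isUnbounded_of_ae_bddAbove
    (h : ∀ k, ∀ᵐ x ∂W.law k, BddAbove (Set.range fun n => W.embeddedWalk i n x)) (j : S) :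
    ¬W.IsUnbounded j := by
  -- `embeddedWalk i 0 = 0` is left out: time `0` need not be a visit to `i`.
  let V (x : T) : ℝ := ⨆ n, W.embeddedWalk i (n + 1) x
  have hV : Measurable V := .iSup fun n => W.measurable_embeddedWalk i (n + 1)
  have h_le (k : S) : ∀ᵐ x ∂W.law k, W.incr x + V (W.shift x) ≤ V x := by
    filter_upwards [W.ae_forall_exists_return i k, h k] with x h_ret h_bdd
    exact incr_add_iSup_embeddedWalk_le (h_ret 1) h_bdd
  exact fun hj =>
    (W.isRenewal_cycleSum j).not_ae_not_bddAbove_of_add_le hV (ae_cycleSum_add_le h_le j j) (hj j)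

theorem HasTrivialCycles.ae_embeddedWalk_eq_zero (h : W.HasTrivialCycles i) :
    ∀ᵐ x ∂W.law i, ∀ n, W.embeddedWalk i n x = 0 := by
  refine ae_all_iff.2 fun n => ?_
  induction n with
  | zero => simp [embeddedWalk]
  | succ n ih =>
    filter_upwards [h, W.ae_returnMap i ih i] with x hx h_next
    rw [embeddedWalk, birkhoffSum_succ', hx, zero_add]
    exact h_next

theorem HasTrivialCycles.ae_bddAbove (h : W.HasTrivialCycles i) (j : S) :
    ∀ᵐ x ∂W.law j, BddAbove (Set.range fun n => W.embeddedWalk i n x) := by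
  filter_upwards [W.ae_returnMap i h.ae_embeddedWalk_eq_zero j] with x hx
  refine (bddAbove_range_birkhoffSum_apply _ _ x).1 ⟨0, ?_⟩
  rintro _ ⟨n, rfl⟩
  exact (hx n).le

theorem HasTrivialCycles.of_hasTrivialCycles (h : W.HasTrivialCycles i) (j : S) :
    W.HasTrivialCycles j := by
  refine (W.isRenewal_cycleSum j).ae_eq_zero_of_coboundary (W.measurable_cycleSum i)
    (ae_eq_cycleSum_add (fun k => ?_) j j)
  filter_upwards [W.ae_forall_exists_return i k, W.ae_iterate_shift_of_ae h k 1] with x h_ret hx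
  by_cases h_state : W.state (W.shift x) = i
  · rw [cycleSum_of_state_shift_eq h_state, left_eq_add]
    exact hx h_state
  · exact cycleSum_of_state_shift_ne h_state (h_ret 1)

theorem DriftsToBot.not_hasTrivialCycles (h : W.DriftsToBot i) (j : S) :
    ¬W.HasTrivialCycles j := by
  intro hj
  obtain ⟨x, hx_bot, hx_zero⟩ :=
    ((h i).and (hj.of_hasTrivialCycles i).ae_embeddedWalk_eq_zero).exists
  simp only [hx_zero] at hx_bot
  exact not_tendsto_const_atBot _ _ hx_bot

theorem DriftsToBot.not_isUnbounded (h : W.DriftsToBot i) (j : S) : ¬W.IsUnbounded j :=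
  not_isUnbounded_of_ae_bddAbove h.ae_bddAbove j

theorem HasTrivialCycles.not_isUnbounded (h : W.HasTrivialCycles i) (j : S) :
    ¬W.IsUnbounded j :=
  not_isUnbounded_of_ae_bddAbove h.ae_bddAbove j

variable (W i)

theorem driftsToBot_or_hasTrivialCycles_or_isUnbounded :
    W.DriftsToBot i ∨ W.HasTrivialCycles i ∨ W.IsUnbounded i := by
  rcases (W.isRenewal_cycleSum i).ae_eq_zero_or_tendsto_atBot_or_not_bddAbove with
    h_zero | h_bot | h_unbdd
  · exact .inr (.inl h_zero)
  · exact .inl fun j => (W.ae_returnMap i h_bot j).mono fun x hx =>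
      (tendsto_atBot_birkhoffSum_apply _ _ x).1 hx
  · exact .inr (.inr fun j => (W.ae_returnMap i h_unbdd j).mono fun x hx =>
      (bddAbove_range_birkhoffSum_apply _ _ x).not.1 hx)

end Alternatives

end MarkovRandomWalk

theorem forall_existsUnique_and_forall_iff {ι κ : Type*} {p : ι → κ → Prop}
    (h_ex : ∀ i, ∃ k, p i k) (h_eq : ∀ i j k l, p i k → p j l → k = l) :
    (∀ i, ∃! k, p i k) ∧ ∀ i j k, p i k ↔ p j k := by
  have h_imp (i j : ι) (k : κ) (hik : p i k) : p j k :=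
    have ⟨l, hjl⟩ := h_ex j
    h_eq i j k l hik hjl ▸ hjl
  refine ⟨fun i => ?_, fun i j k => ⟨h_imp i j k, h_imp j i k⟩⟩
  obtain ⟨k, hik⟩ := h_ex i
  exact ⟨k, hik, fun l hil => h_eq i i l k hil hik⟩

open MarkovRandomWalk in
theorem trichotomy_embedded_general {S T : Type*} [MeasurableSpace S]
    [MeasurableSingletonClass S] [Countable S] [MeasurableSpace T] (W : MarkovRandomWalk S T) :
    (∀ i, ∃! k : Fin 3, ![W.DriftsToBot i, W.HasTrivialCycles i, W.IsUnbounded i] k) ∧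
      ∀ i j, ∀ k : Fin 3, ![W.DriftsToBot i, W.HasTrivialCycles i, W.IsUnbounded i] k ↔
        ![W.DriftsToBot j, W.HasTrivialCycles j, W.IsUnbounded j] k := by
  refine forall_existsUnique_and_forall_iff
    (p := fun i => ![W.DriftsToBot i, W.HasTrivialCycles i, W.IsUnbounded i]) (fun i => ?_)
    fun i j k l hk hl => ?_
  · rcases W.driftsToBot_or_hasTrivialCycles_or_isUnbounded i with h | h | h
    exacts [⟨0, h⟩, ⟨1, h⟩, ⟨2, h⟩]
  · fin_cases k <;> fin_cases l
    exacts [rfl, absurd hl (DriftsToBot.not_hasTrivialCycles hk j),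
      absurd hl (DriftsToBot.not_isUnbounded hk j),
      absurd hk (DriftsToBot.not_hasTrivialCycles hl i), rfl,
      absurd hl (HasTrivialCycles.not_isUnbounded hk j),
      absurd hk (DriftsToBot.not_isUnbounded hl i),
      absurd hk (HasTrivialCycles.not_isUnbounded hl i), rfl]

/-! ### Path space -/

section PathSpace

/-- The left shift on sequences. -/
def seqShift {α : Type*} (x : ℕ → α) (k : ℕ) : α := x (k + 1)

theorem iterate_seqShift_apply {α : Type*} (n : ℕ) (x : ℕ → α) (k : ℕ) :
    seqShift^[n] x k = x (k + n) := by
  induction n generalizing x with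
  | zero => rfl
  | succ n ih => rw [Function.iterate_succ_apply, ih, seqShift, add_assoc]

theorem measurable_seqShift {α : Type*} [MeasurableSpace α] :
    Measurable (seqShift : (ℕ → α) → ℕ → α) :=
  measurable_pi_lambda _ fun k => measurable_pi_apply (k + 1)

variable {S α : Type*}

/-- The trajectories `(s_k, a_k)_k` with `s_0, …, s_n` prescribed by `path` and `a_k ∈ E k` for
`k < n`: here `a_k` belongs to the step from `s_k` to `s_{k + 1}`. -/
def pathCylinder (n : ℕ) (path : ℕ → S) (E : ℕ → Set α) : Set (ℕ → S × α) :=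
  {x | (∀ k ≤ n, (x k).1 = path k) ∧ ∀ k < n, (x k).2 ∈ E k}

theorem mem_pathCylinder_zero_iff {path : ℕ → S} {E : ℕ → Set α} {x : ℕ → S × α} :
    x ∈ pathCylinder 0 path E ↔ (x 0).1 = path 0 := by
  simp [pathCylinder]

theorem mem_pathCylinder_succ_iff {n : ℕ} {path : ℕ → S} {E : ℕ → Set α} {x : ℕ → S × α} :
    x ∈ pathCylinder (n + 1) path E ↔ (x 0).1 = path 0 ∧ (x 0).2 ∈ E 0 ∧
      seqShift x ∈ pathCylinder n (seqShift path) (seqShift E) := by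
  simp only [pathCylinder, Set.mem_ofPred_eq, ← Nat.lt_succ_iff, Nat.forall_lt_succ_left, seqShift]
  tauto

variable [MeasurableSpace α]

theorem isPiSystem_pathCylinder :
    IsPiSystem {s : Set (ℕ → S × α) |
      ∃ n path E, (∀ k, MeasurableSet (E k)) ∧ pathCylinder n path E = s} := by
  rintro _ ⟨n, path, E, hE, rfl⟩ _ ⟨n', path', E', hE', rfl⟩ ⟨x, ⟨hx, -⟩, hx', -⟩
  refine ⟨max n n', fun k => (x k).1,
    fun k => {a | (k < n → a ∈ E k) ∧ (k < n' → a ∈ E' k)}, fun k => ?_, ?_⟩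
  · simp only [Set.ofPred_and, Set.ofPred_forall]
    exact (MeasurableSet.iInter fun _ => hE k).inter (.iInter fun _ => hE' k)
  · ext y
    simp only [pathCylinder, Set.mem_ofPred_eq, Set.mem_inter_iff]
    grind

variable [MeasurableSpace S] [MeasurableSingletonClass S]

theorem measurableSet_fst_apply_eq (k : ℕ) (s : S) :
    MeasurableSet {x : ℕ → S × α | (x k).1 = s} :=
  (measurable_pi_apply k).fst (measurableSet_singleton s)

theorem measurableSet_pathCylinder (n : ℕ) (path : ℕ → S) {E : ℕ → Set α}
    (hE : ∀ k, MeasurableSet (E k)) : MeasurableSet (pathCylinder n path E) := by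
  simp only [pathCylinder, Set.ofPred_and, Set.ofPred_forall]
  exact (MeasurableSet.iInter fun k => .iInter fun _ => measurableSet_fst_apply_eq k (path k)).inter
    (.iInter fun k => .iInter fun _ => (measurable_pi_apply k).snd (hE k))

theorem generateFrom_pathCylinder [Countable S] :
    (MeasurableSpace.pi : MeasurableSpace (ℕ → S × α)) = MeasurableSpace.generateFrom
      {s | ∃ n path E, (∀ k, MeasurableSet (E k)) ∧ pathCylinder n path E = s} := by
  refine le_antisymm (iSup_le fun k => ?_) (MeasurableSpace.generateFrom_le ?_)
  · rintro _ ⟨G, hG, rfl⟩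
    have h_union : (fun x : ℕ → S × α => x k) ⁻¹' G =
        ⋃ v : Fin (k + 2) → S, pathCylinder (k + 1) (fun l => v (Fin.ofNat (k + 2) l))
          fun l => {a | l = k → (v (Fin.ofNat (k + 2) k), a) ∈ G} := by
      ext x
      have h_val {l : ℕ} (hl : l ≤ k + 1) : (Fin.ofNat (k + 2) l : ℕ) = l :=
        Nat.mod_eq_of_lt (Nat.lt_succ_of_le hl)
      rw [Set.mem_iUnion]
      refine ⟨fun hx => ⟨fun l => (x l).1, fun l hl => ?_, ?_⟩, ?_⟩
      · exact congrArg (fun m => (x m).1) (h_val hl).symm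
      · rintro l - rfl
        simpa only [Set.mem_ofPred_eq, h_val l.le_succ, Set.mem_preimage] using hx
      · rintro ⟨v, hv, hx⟩
        have h_fst : (x k).1 = v (Fin.ofNat (k + 2) k) := hv k k.le_succ
        simpa only [Set.mem_ofPred_eq, forall_const, ← h_fst, Set.mem_preimage] using
          hx k k.lt_succ_self
    rw [h_union]
    refine .iUnion fun v => MeasurableSpace.measurableSet_generateFrom ⟨_, _, _, fun l => ?_, rfl⟩
    simp only [Set.ofPred_forall]
    exact .iInter fun _ => measurable_prodMk_left hG
  · rintro _ ⟨n, path, E, hE, rfl⟩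
    exact measurableSet_pathCylinder n path hE

theorem ext_of_pathCylinder [Countable S] {μ ν : Measure (ℕ → S × α)} [IsFiniteMeasure μ]
    (h_univ : μ Set.univ = ν Set.univ)
    (h : ∀ n path E, (∀ k, MeasurableSet (E k)) →
      μ (pathCylinder n path E) = ν (pathCylinder n path E)) : μ = ν := by
  refine ext_of_generate_finite _ generateFrom_pathCylinder isPiSystem_pathCylinder ?_ h_univ
  rintro _ ⟨n, path, E, hE, rfl⟩
  exact h n path E hE

end PathSpace

/-! ### The walk `log |Π_n|` -/

namespace MMSetting

variable {S : Type*} [MeasurableSpace S] [MeasurableSingletonClass S] [Countable S]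
variable {Ω : Type*} [MeasurableSpace Ω] (X : MMSetting S Ω)

section PathLaw

instance (i : S) : IsProbabilityMeasure (X.P i) := X.prob i

/-- The trajectory of the driving chain and the multipliers; `A k`, the paper's `A_{k+1}`, goes
with the step from `M k` to `M (k + 1)`. -/
def toPath (ω : Ω) (k : ℕ) : S × ℝ := (X.M k ω, X.A k ω)

theorem measurable_toPath : Measurable X.toPath :=
  measurable_pi_lambda _ fun k => (X.measM k).prodMk (X.measA k)

/-- The law of the trajectory when the driving chain starts at `i`. -/
def pathLaw (i : S) : Measure (ℕ → S × ℝ) := (X.P i).map X.toPath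

instance (i : S) : IsProbabilityMeasure (X.pathLaw i) :=
  Measure.isProbabilityMeasure_map X.measurable_toPath.aemeasurable

theorem ae_pathLaw_iff {i : S} {q : (ℕ → S × ℝ) → Prop} (hq : MeasurableSet {x | q x}) :
    (∀ᵐ x ∂X.pathLaw i, q x) ↔ ∀ᵐ ω ∂X.P i, q (X.toPath ω) :=
  ae_map_iff X.measurable_toPath.aemeasurable hq

theorem ae_fst_zero_eq (i : S) : ∀ᵐ x ∂X.pathLaw i, (x 0).1 = i :=
  (X.ae_pathLaw_iff (measurableSet_fst_apply_eq 0 i)).2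
    ((mem_ae_iff_prob_eq_one (X.measM 0 (measurableSet_singleton i))).2 (X.start i))

variable {i : S} {n : ℕ} {path : ℕ → S} {E : ℕ → Set ℝ} {F : Set ℝ}

theorem pathLaw_pathCylinder (h : path 0 = i) (hE : ∀ k, MeasurableSet (E k)) :
    X.pathLaw i (pathCylinder n path E) = ∏ k ∈ Finset.range n,
      X.p (path k) (path (k + 1)) * X.K (path k) (path (k + 1)) (Prod.fst ⁻¹' E k) := by
  rw [Finset.prod_mul_distrib, ← X.chain i n path h,
    ← X.modulated i n path (fun k => Prod.fst ⁻¹' E k) h fun k => measurable_fst (hE k), pathLaw,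
    Measure.map_apply X.measurable_toPath (measurableSet_pathCylinder n path hE)]
  congr 1
  ext ω
  simp [pathCylinder, toPath]

theorem pathLaw_pathCylinder_of_ne (h : path 0 ≠ i) :
    X.pathLaw i (pathCylinder n path E) = 0 :=
  measure_eq_zero_iff_ae_notMem.2 ((X.ae_fst_zero_eq i).mono fun _ hx hx' =>
    h ((hx'.1 0 n.zero_le).symm.trans hx))

theorem pathLaw_first_step_and_pathCylinder (i : S) (hF : MeasurableSet F)
    (hE : ∀ k, MeasurableSet (E k)) :
    X.pathLaw i {x | (x 0).2 ∈ F ∧ seqShift x ∈ pathCylinder n path E} =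
      X.p i (path 0) * X.K i (path 0) (Prod.fst ⁻¹' F) *
        X.pathLaw (path 0) (pathCylinder n path E) := by
  let path' : ℕ → S := fun k => k.casesOn i path
  let E' : ℕ → Set ℝ := fun k => k.casesOn F E
  have h_cons : X.pathLaw i {x | (x 0).2 ∈ F ∧ seqShift x ∈ pathCylinder n path E} =
      X.pathLaw i (pathCylinder (n + 1) path' E') :=
    measure_congr ((X.ae_fst_zero_eq i).mono fun x hx => propext
      ((mem_pathCylinder_succ_iff (path := path') (E := E')).trans (and_iff_right hx)).symm)
  have hE' : ∀ k, MeasurableSet (E' k)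
    | 0 => hF
    | k + 1 => hE k
  rw [h_cons, X.pathLaw_pathCylinder (i := i) rfl hE',
    X.pathLaw_pathCylinder rfl hE, Finset.prod_range_succ', mul_comm]
  rfl

theorem map_restrict_seqShift (i j : S) (hF : MeasurableSet F) :
    ((X.pathLaw i).restrict {x | (x 1).1 = j ∧ (x 0).2 ∈ F}).map seqShift =
      X.pathLaw i {x | (x 1).1 = j ∧ (x 0).2 ∈ F} • X.pathLaw j := by
  refine ext_of_pathCylinder ?_ fun n path E hE => ?_
  · simp [Measure.map_apply measurable_seqShift]
  have h_cyl := measurableSet_pathCylinder n path hE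
  rw [Measure.map_apply measurable_seqShift h_cyl,
    Measure.restrict_apply (measurable_seqShift h_cyl), Measure.smul_apply, smul_eq_mul]
  rcases eq_or_ne (path 0) j with rfl | h
  · have h_inter : seqShift ⁻¹' pathCylinder n path E ∩ {x | (x 1).1 = path 0 ∧ (x 0).2 ∈ F} =
        {x | (x 0).2 ∈ F ∧ seqShift x ∈ pathCylinder n path E} :=
      Set.ext fun x => ⟨fun hx => ⟨hx.2.2, hx.1⟩, fun hx => ⟨hx.2, hx.2.1 0 n.zero_le, hx.1⟩⟩
    have h_one : {x : ℕ → S × ℝ | (x 1).1 = path 0 ∧ (x 0).2 ∈ F} =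
        {x | (x 0).2 ∈ F ∧ seqShift x ∈ pathCylinder 0 path E} :=
      Set.ext fun x => and_comm.trans <|
        and_congr_right' (mem_pathCylinder_zero_iff (x := seqShift x)).symm
    rw [h_inter, h_one, X.pathLaw_first_step_and_pathCylinder i hF hE,
      X.pathLaw_first_step_and_pathCylinder i hF hE, X.pathLaw_pathCylinder rfl hE,
      X.pathLaw_pathCylinder rfl hE, Finset.prod_range_zero, mul_one]
  · rw [X.pathLaw_pathCylinder_of_ne h, mul_zero]
    refine measure_mono_null (fun x hx => ?_) measure_empty
    exact h ((hx.1.1 0 n.zero_le).symm.trans hx.2.1)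

theorem map_restrict_snd_zero_seqShift (i j : S) :
    ((X.pathLaw i).restrict {x | (x 1).1 = j}).map (fun x => ((x 0).2, seqShift x)) =
      (((X.pathLaw i).restrict {x | (x 1).1 = j}).map fun x => (x 0).2).prod (X.pathLaw j) := by
  have h_snd : Measurable fun x : ℕ → S × ℝ => (x 0).2 := (measurable_pi_apply 0).snd
  refine (Measure.prod_eq fun F t hF ht => ?_).symm
  have h_step := measurableSet_fst_apply_eq (α := ℝ) 1 j
  have h := congrArg (· t) (X.map_restrict_seqShift i j hF)
  simp only [Measure.map_apply measurable_seqShift ht, Measure.smul_apply, smul_eq_mul,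
    Measure.restrict_apply (measurable_seqShift ht)] at h
  rw [Measure.map_apply (h_snd.prodMk measurable_seqShift) (hF.prod ht),
    Measure.map_apply h_snd hF, Measure.restrict_apply' h_step, Measure.restrict_apply' h_step,
    Set.inter_comm (_ ⁻¹' F)]
  refine (congrArg _ (Set.ext fun x => ?_)).trans h
  exact ⟨fun hx => ⟨hx.1.2, hx.2, hx.1.1⟩, fun hx => ⟨⟨hx.2.2, hx.1⟩, hx.2.1⟩⟩

end PathLaw

/-- The walk `log |Π_n|` on the space of trajectories, modulated by the driving chain; a vanishing
multiplier contributes the junk value `log 0 = 0`. -/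
def logWalk : MarkovRandomWalk S (ℕ → S × ℝ) where
  law := X.pathLaw
  isProbabilityMeasure_law := inferInstance
  state x := (x 0).1
  incr x := Real.log |(x 0).2|
  shift := seqShift
  measurable_state := (measurable_pi_apply 0).fst
  measurable_incr := (measurable_pi_apply 0).snd.abs.log
  measurable_shift := measurable_seqShift
  ae_state_eq := X.ae_fst_zero_eq
  markov i j := by
    have h_snd : Measurable fun x : ℕ → S × ℝ => (x 0).2 := (measurable_pi_apply 0).snd
    have h_log : Measurable fun a : ℝ => Real.log |a| := measurable_id.abs.log
    have h := congrArg (Measure.map (Prod.map (fun a => Real.log |a|) id))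
      (X.map_restrict_snd_zero_seqShift i j)
    rwa [Measure.map_map (h_log.prodMap measurable_id) (h_snd.prodMk measurable_seqShift),
      ← Measure.map_prod_map _ _ h_log measurable_id, Measure.map_map h_log h_snd,
      Measure.map_id] at h
  irreducible i j := by
    obtain ⟨n, hn⟩ := X.irreducible i j
    refine ⟨n, ?_⟩
    simp only [iterate_seqShift_apply, zero_add]
    rw [pathLaw, Measure.map_apply X.measurable_toPath (measurableSet_fst_apply_eq n j)]
    exact hn.ne'
  recurrent i := by
    have h_meas : MeasurableSet {x : ℕ → S × ℝ | ∃ n, 0 < n ∧ (x n).1 = i} := by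
      simp only [Set.ofPred_exists, Set.ofPred_and]
      exact .iUnion fun n => (MeasurableSet.const (0 < n)).inter (measurableSet_fst_apply_eq n i)
    simp only [iterate_seqShift_apply, zero_add]
    exact (X.ae_pathLaw_iff h_meas).2
      ((mem_ae_iff_prob_eq_one (X.measurable_toPath h_meas)).2 (X.recurrent i))

theorem ae_Pπ_iff {q : Ω → Prop} : (∀ᵐ ω ∂X.Pπ, q ω) ↔ ∀ j, ∀ᵐ ω ∂X.P j, q ω := by
  simp only [Pπ, Measure.ae_sum_iff, Measure.ae_ennreal_smul_measure_iff (X.πpos _).ne']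

section EmbeddedWalk

variable {X} {ω : Ω} {i : S}

theorem state_iterate_shift_toPath (n : ℕ) :
    X.logWalk.state (X.logWalk.shift^[n] (X.toPath ω)) = X.M n ω := by
  simp only [logWalk, iterate_seqShift_apply, zero_add, toPath]

theorem incr_iterate_shift_toPath (n : ℕ) :
    X.logWalk.incr (X.logWalk.shift^[n] (X.toPath ω)) = Real.log |X.A n ω| := by
  simp only [logWalk, iterate_seqShift_apply, zero_add, toPath]

theorem abs_Pprod_eq_exp (h : ∀ k, X.A k ω ≠ 0) (n : ℕ) : |X.Pprod n ω| =
    Real.exp (birkhoffSum X.logWalk.shift X.logWalk.incr n (X.toPath ω)) := by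
  rw [Pprod, Finset.abs_prod, birkhoffSum, Real.exp_sum]
  refine Finset.prod_congr rfl fun k _ => ?_
  rw [incr_iterate_shift_toPath, Real.exp_log (abs_pos.2 (h k))]

theorem tau_eq_birkhoffSum_returnTime (h : ∀ k, ∃ n, 0 < n ∧ X.M (n + k) ω = i) (n : ℕ) :
    X.tau i n ω = birkhoffSum (X.logWalk.returnMap i)
      (X.logWalk.returnTime i) n (X.toPath ω) := by
  induction n with
  | zero => rfl
  | succ n ih =>
    have h_map : (X.logWalk.returnMap i)^[n] (X.toPath ω) =
        X.logWalk.shift^[X.tau i n ω] (X.toPath ω) := by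
      rw [ih]
      exact iterate_timeChange n _
    have h_return : X.logWalk.returnTime i
        ((X.logWalk.returnMap i)^[n] (X.toPath ω)) =
          sInf {m | 0 < m ∧ X.M (m + X.tau i n ω) ω = i} := by
      simp only [h_map, MarkovRandomWalk.returnTime, ← Function.iterate_add_apply,
        state_iterate_shift_toPath]
    have h_mem : sInf {k | X.tau i n ω < k ∧ X.M k ω = i} ∈ _ :=
      Nat.sInf_mem ((h (X.tau i n ω)).imp' (· + X.tau i n ω) fun m hm =>
        ⟨Nat.lt_add_of_pos_left hm.1, hm.2⟩)
    rw [birkhoffSum_succ, ← ih, h_return]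
    refine (Nat.sInf_add h_mem.1.le).symm.trans ?_
    rw [add_comm]
    simp only [lt_add_iff_pos_left]

theorem abs_Pprod_tau_eq_exp (h_ne : ∀ k, X.A k ω ≠ 0)
    (h_ret : ∀ k, ∃ n, 0 < n ∧ X.M (n + k) ω = i) (n : ℕ) :
    |X.Pprod (X.tau i n ω) ω| = Real.exp (X.logWalk.embeddedWalk i n (X.toPath ω)) := by
  rw [abs_Pprod_eq_exp h_ne, tau_eq_birkhoffSum_returnTime h_ret]
  exact congrArg Real.exp (birkhoffSum_timeChange _ n _).symm

variable (X i)

theorem ae_forall_A_ne_zero (hA : X.Pπ {ω | X.A 0 ω = 0} = 0) (j : S) :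
    ∀ᵐ ω ∂X.P j, ∀ k, X.A k ω ≠ 0 := by
  have h_zero (j : S) : ∀ᵐ x ∂X.pathLaw j, (x 0).2 ≠ 0 :=
    (X.ae_pathLaw_iff ((measurable_pi_apply 0).snd (measurableSet_singleton 0).compl)).2
      (X.ae_Pπ_iff.1 (measure_eq_zero_iff_ae_notMem.1 hA) j)
  have h_path := ae_of_ae_map X.measurable_toPath.aemeasurable
    (X.logWalk.ae_forall_iterate_shift h_zero j)
  filter_upwards [h_path] with ω hω k
  have hk := hω k
  simpa only [logWalk, iterate_seqShift_apply, zero_add, toPath] using hk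

theorem ae_abs_Pprod_tau_eq_exp (hA : X.Pπ {ω | X.A 0 ω = 0} = 0) (j : S) :
    ∀ᵐ ω ∂X.P j, ∀ n, |X.Pprod (X.tau i n ω) ω| =
      Real.exp (X.logWalk.embeddedWalk i n (X.toPath ω)) := by
  have h_ret := ae_of_ae_map X.measurable_toPath.aemeasurable
    (X.logWalk.ae_forall_exists_return i j)
  filter_upwards [X.ae_forall_A_ne_zero hA j, h_ret] with ω h_ne h_ret
  simp only [← Function.iterate_add_apply, state_iterate_shift_toPath] at h_ret
  exact abs_Pprod_tau_eq_exp h_ne h_ret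

end EmbeddedWalk

section Alternatives

variable (hA : X.Pπ {ω | X.A 0 ω = 0} = 0) (i : S)

include hA

theorem altT1_iff : X.AltT1 i ↔ X.logWalk.DriftsToBot i := by
  rw [AltT1, ae_Pπ_iff]
  refine forall_congr' fun j => ?_
  refine Iff.trans ?_ (X.ae_pathLaw_iff (measurableSet_tendsto atBot
    (X.logWalk.measurable_embeddedWalk i))).symm
  refine eventually_congr ((X.ae_abs_Pprod_tau_eq_exp i hA j).mono fun ω hω => ?_)
  rw [← Real.tendsto_exp_comp_nhds_zero, tendsto_zero_iff_abs_tendsto_zero]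
  exact tendsto_congr hω

theorem altT2_iff : X.AltT2 i ↔ X.logWalk.HasTrivialCycles i := by
  have h_meas : MeasurableSet {x | X.logWalk.cycleSum i x = 0} :=
    X.logWalk.measurable_cycleSum i (measurableSet_singleton 0)
  have h_iff : ∀ᵐ ω ∂X.P i, |X.Ai i ω| = 1 ↔ X.logWalk.cycleSum i (X.toPath ω) = 0 := by
    filter_upwards [X.ae_abs_Pprod_tau_eq_exp i hA i] with ω hω
    rw [Ai, hω, Real.exp_eq_one_iff, MarkovRandomWalk.embeddedWalk, birkhoffSum_one]
  have h_eq : X.P i {ω | |X.Ai i ω| = 1} = X.P i {ω | X.logWalk.cycleSum i (X.toPath ω) = 0} :=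
    measure_congr (h_iff.mono fun ω hω => propext hω)
  rw [AltT2, h_eq]
  exact (mem_ae_iff_prob_eq_one (X.measurable_toPath h_meas)).symm.trans
    (X.ae_pathLaw_iff h_meas).symm

theorem altT3_iff : X.AltT3 i ↔ X.logWalk.IsUnbounded i := by
  rw [AltT3, ae_Pπ_iff]
  refine forall_congr' fun j => ?_
  refine Iff.trans ?_ (X.ae_pathLaw_iff (measurableSet_bddAbove_range
    (X.logWalk.measurable_embeddedWalk i)).compl).symm
  refine eventually_congr ((X.ae_abs_Pprod_tau_eq_exp i hA j).mono fun ω hω => ?_)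
  have h_range : ¬BddAbove (Set.range fun n => X.logWalk.embeddedWalk i n (X.toPath ω)) ↔
      ∀ C, ∃ n, C < X.logWalk.embeddedWalk i n (X.toPath ω) := by
    simp only [not_bddAbove_iff, Set.exists_range_iff]
  refine Iff.trans ?_ h_range.symm
  simp only [hω]
  refine ⟨fun h C => (h (Real.exp C)).imp fun n => Real.exp_lt_exp.1, fun h C => ?_⟩
  exact (h C).imp fun n hn => hn.trans ((lt_add_one _).trans_le (Real.add_one_le_exp _))

end Alternatives

end MMSetting

/-- **Proposition 2.2** (trichotomy for the embedded multiplicative random walks).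
If `P_π(A_1 = 0) = 0`, then for every `i ∈ S` exactly one of the alternatives
(T1') `Π_{τ_n(i)} → 0` a.s., (T2') `P_i(|Π_{τ(i)}| = 1) = 1`,
(T3') `limsup_n |Π_{τ_n(i)}| = ∞` a.s. holds, and the alternative that occurs is the
same for all `i ∈ S`. -/
theorem trichotomy_embedded
    {S : Type*} [MeasurableSpace S] [MeasurableSingletonClass S] [Countable S]
    {Ω : Type*} [MeasurableSpace Ω] (X : MMSetting S Ω)
    (hA : X.Pπ {ω | X.A 0 ω = 0} = 0) :
    (∀ i : S, ∃! k : Fin 3, ![X.AltT1 i, X.AltT2 i, X.AltT3 i] k) ∧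
      (∀ i j : S, ∀ k : Fin 3,
        (![X.AltT1 i, X.AltT2 i, X.AltT3 i] k ↔ ![X.AltT1 j, X.AltT2 j, X.AltT3 j] k)) := by
  simpa only [X.altT1_iff hA, X.altT2_iff hA, X.altT3_iff hA] using
    trichotomy_embedded_general X.logWalk

end Perpetuities
end
end

section
/- In the Markov-modulated setting with |S|>1, if there exist constants b_i∈R such that P_i((A_1^i,B_1^i)=(1,b_i))=1 for all i∈S, then b_i=0 for all i∈S. -/
open MeasureTheory ProbabilityTheory Filter
open scoped ENNReal NNReal Topology

noncomputable section

namespace Perpetuities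

open MMSetting

/-!
Choose a point `z i j` in the support of each kernel `K i j`. Along every first-return loop at `i`,
the composition of the affine maps attached to the points `z` is a limit of almost surely attained
values of the cycle variables at `i`, hence is the shift `x ↦ x + b i`. This turns the theorem into
a statement about weights of loops in the directed graph of possible transitions: a loop at `i` with
`n` returns to `i` has weight `x ↦ x + n * b i`.

If `b j ≠ 0`, this weight counts returns, and comparing base points shows that two loops at `j`
with equally many visits to `j` have equally many visits to every state. The visits of any loop at
`j` are therefore those of one first-return loop `c₀`, repeated. So the length of `c₀` divides the
length of every loop at `j`, by aperiodicity it is `1`, and no loop at `j` leaves `j`, which is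
impossible when `|S| > 1`.
-/

section Quiver

open Quiver

variable {V : Type*} [Quiver V]

/-- The vertices through which a path passes after its start, in order and with repetitions, so
that `(visits q).count i` is the number of times that `q` enters `i`. -/
def visits {i j : V} (q : Path i j) : List V := q.vertices.tail

@[simp]
lemma visits_nil (i : V) : visits (.nil : Path i i) = [] := rfl

@[simp]
lemma visits_cons {i j k : V} (q : Path i j) (e : j ⟶ k) :
    visits (q.cons e) = visits q ++ [k] := by
  rw [visits, Path.vertices_cons, List.concat_eq_append,
    List.tail_append_of_ne_nil q.vertices_ne_nil, visits]

@[simp]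
lemma visits_comp {i j k : V} (p : Path i j) (q : Path j k) :
    visits (p.comp q) = visits p ++ visits q := by
  induction q with
  | nil => simp
  | cons q e ih => rw [Path.comp_cons, visits_cons, visits_cons, ih, List.append_assoc]

@[simp]
lemma length_visits {i j : V} (q : Path i j) : (visits q).length = q.length := by
  simp [visits]

lemma end_mem_visits {i j : V} (hij : i ≠ j) (q : Path i j) : j ∈ visits q := by
  cases q with
  | nil => exact absurd rfl hij
  | cons q e => simp

lemma exists_eq_loop_comp {i j : V} (q : Path i j) :
    ∃ (l : Path i i) (r : Path i j), q = l.comp r ∧ i ∉ visits r :=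
  q.exists_eq_comp_and_notMem_tail_of_mem_vertices q.start_mem_vertices

lemma exists_path_length_eq (f : ℕ → V) (n : ℕ) (hf : ∀ k < n, Nonempty (f k ⟶ f (k + 1))) :
    ∃ q : Path (f 0) (f n), q.length = n := by
  induction n with
  | zero => exact ⟨.nil, rfl⟩
  | succ n ih =>
    obtain ⟨q, hq⟩ := ih fun k hk => hf k (hk.trans n.lt_succ_self)
    obtain ⟨e⟩ := hf n n.lt_succ_self
    exact ⟨q.cons e, by rw [Path.length_cons, hq]⟩

/-- The `k`-th vertex of a path, so that a path becomes a sequence indexed by `ℕ`; the sequence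
stays at the endpoint once `k` exceeds the length. -/
def vertexAt {i : V} : ∀ {j : V}, Path i j → ℕ → V
  | _, .nil, _ => i
  | k, .cons q _, n => if n ≤ q.length then vertexAt q n else k

lemma vertexAt_cons_of_le {i j k : V} (q : Path i j) (e : j ⟶ k) {n : ℕ} (hn : n ≤ q.length) :
    vertexAt (q.cons e) n = vertexAt q n :=
  if_pos hn

@[simp]
lemma vertexAt_zero {i j : V} (q : Path i j) : vertexAt q 0 = i := by
  induction q with
  | nil => rfl
  | cons q e ih => rw [vertexAt_cons_of_le q e (Nat.zero_le _), ih]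

@[simp]
lemma vertexAt_length {i j : V} (q : Path i j) : vertexAt q q.length = j := by
  cases q with
  | nil => rfl
  | cons q e => exact if_neg (Nat.not_succ_le_self _)

lemma vertexAt_cons_length {i j k : V} (q : Path i j) (e : j ⟶ k) :
    vertexAt (q.cons e) (q.length + 1) = k :=
  vertexAt_length (q.cons e)

lemma nonempty_hom_vertexAt {i j : V} (q : Path i j) {n : ℕ} (hn : n < q.length) :
    Nonempty (vertexAt q n ⟶ vertexAt q (n + 1)) := by
  induction q with
  | nil => exact absurd hn n.not_lt_zero
  | cons q e ih =>
    obtain hlt | rfl := Nat.lt_succ_iff_lt_or_eq.1 hn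
    · rw [vertexAt_cons_of_le q e hlt.le, vertexAt_cons_of_le q e hlt]
      exact ih hlt
    · rw [vertexAt_cons_of_le q e le_rfl, vertexAt_length, vertexAt_cons_length]
      exact ⟨e⟩

lemma vertexAt_mem_visits {i j : V} (q : Path i j) {n : ℕ} (hpos : 0 < n)
    (hn : n ≤ q.length) : vertexAt q n ∈ visits q := by
  induction q with
  | nil => exact absurd hpos hn.not_gt
  | cons q e ih =>
    rw [visits_cons, List.mem_append, List.mem_singleton]
    obtain hle | rfl := Nat.le_succ_iff.1 hn
    · exact .inl (vertexAt_cons_of_le q e hle ▸ ih hle)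
    · exact .inr (vertexAt_cons_length q e)

lemma weightOfEPs_eq_prod_vertexAt {R : Type*} [Monoid R] (w : V → V → R) {i j : V}
    (q : Path i j) :
    q.weightOfEPs w =
      ((List.range q.length).map fun n => w (vertexAt q n) (vertexAt q (n + 1))).prod := by
  induction q with
  | nil => simp [Path.weightOfEPs_nil]
  | cons q e ih =>
    rw [Path.weightOfEPs_cons, Path.length_cons, List.prod_range_succ, vertexAt_cons_length,
      vertexAt_cons_of_le q e le_rfl, vertexAt_length, ih]
    congr 2
    refine List.map_congr_left fun n hn => ?_
    have hn := List.mem_range.1 hn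
    rw [vertexAt_cons_of_le q e hn.le, vertexAt_cons_of_le q e hn]

lemma exists_loop_count_eq_one [DecidableEq V] {i : V} (c : Path i i) (hc : c.length ≠ 0) :
    ∃ c₀ : Path i i, (visits c₀).count i = 1 := by
  cases c with
  | nil => exact absurd rfl hc
  | cons q e =>
    obtain ⟨_, r, -, hr⟩ := exists_eq_loop_comp q
    exact ⟨r.cons e, by simp [List.count_eq_zero_of_not_mem hr]⟩

lemma exists_loop_count_eq_mul [DecidableEq V] {i : V} (c : Path i i) (n : ℕ) :
    ∃ c' : Path i i, ∀ v, (visits c').count v = n * (visits c).count v := by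
  induction n with
  | zero => exact ⟨.nil, by simp⟩
  | succ n ih =>
    obtain ⟨c', hc'⟩ := ih
    exact ⟨c'.comp c, fun v => by rw [visits_comp, List.count_append, hc', Nat.succ_mul]⟩

section Weight

variable {R : Type*} [Monoid R]

/-- Every first-return loop at `i`, i.e. every loop of positive length meeting `i` only at its two
ends, has weight `g`; the deterministic counterpart of a constant cycle variable `(A_1^i, B_1^i)`.
Such a loop is encoded as a path `r` that does not revisit `i`, followed by a closing edge `e`. -/
def FirstReturnWeight (w : ∀ {i j : V}, (i ⟶ j) → R) (i : V) (g : R) : Prop :=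
  ∀ ⦃k : V⦄ (r : Path i k) (e : k ⟶ i), i ∉ visits r → (r.cons e).weight w = g

variable {w : ∀ {i j : V}, (i ⟶ j) → R} {i j : V} {gi gj : R}

lemma FirstReturnWeight.weight_loop [DecidableEq V] (hi : FirstReturnWeight w i gi) :
    ∀ c : Path i i, c.weight w = gi ^ (visits c).count i
  | .nil => by simp
  | .cons q e => by
    obtain ⟨l, r, rfl, hr⟩ := exists_eq_loop_comp q
    calc ((l.comp r).cons e).weight w
        = l.weight w * (r.cons e).weight w := by rw [← Path.weight_comp, Path.comp_cons]
      _ = gi ^ ((visits l).count i + 1) := by rw [hi.weight_loop l, hi r e hr, pow_succ]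
      _ = gi ^ (visits ((l.comp r).cons e)).count i := by
        simp [List.count_eq_zero_of_not_mem hr]
  termination_by c => c.length

/-- Loops at `j` with equally many visits to `j` have the same weight, hence so do the loops at
`i` obtained from them by conjugation, and these determine the number of visits to `i`. -/
lemma FirstReturnWeight.count_eq_count [DecidableEq V] (hi : FirstReturnWeight w i gi)
    (hj : FirstReturnWeight w j gj) (hinj : Function.Injective (gi ^ · : ℕ → R))
    (p : Path i j) (q : Path j i) {c c' : Path j j}
    (h : (visits c).count j = (visits c').count j) :
    (visits c).count i = (visits c').count i := by
  have hweight : ((p.comp c).comp q).weight w = ((p.comp c').comp q).weight w := by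
    simp only [Path.weight_comp, hj.weight_loop, h]
  rw [hi.weight_loop, hi.weight_loop] at hweight
  have hcount := hinj hweight
  simp only [visits_comp, List.count_append] at hcount
  lia

lemma FirstReturnWeight.injective_pow (hi : FirstReturnWeight w i gi)
    (hj : FirstReturnWeight w j gj) (hinj : Function.Injective (gj ^ · : ℕ → R))
    (hij : i ≠ j) (p : Path i j) (q : Path j i) : Function.Injective (gi ^ · : ℕ → R) := by
  classical
  have hpos : 0 < (visits (p.comp q)).count j := by
    rw [List.count_pos_iff, visits_comp]
    exact List.mem_append_left _ (end_mem_visits hij p)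
  have conj_pow (n : ℕ) :
      q.weight w * (gi ^ n) ^ (visits (p.comp q)).count i * p.weight w =
        gj ^ ((n + 1) * (visits (p.comp q)).count j) := by
    obtain ⟨c, hc⟩ := exists_loop_count_eq_mul (p.comp q) n
    have hcount : (visits ((q.comp c).comp p)).count j =
        (n + 1) * (visits (p.comp q)).count j := by
      simp only [visits_comp, List.count_append] at hc ⊢
      rw [hc]
      ring
    rw [← hcount, ← hj.weight_loop, Path.weight_comp, Path.weight_comp, hi.weight_loop, hc, pow_mul]
  intro m n (hmn : gi ^ m = gi ^ n)
  have hpow := conj_pow m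
  rw [hmn, conj_pow n] at hpow
  exact Nat.succ_injective (Nat.eq_of_mul_eq_mul_right hpos (hinj hpow)).symm

lemma FirstReturnWeight.visits_perm [DecidableEq V] {g : V → R}
    (hg : ∀ i, FirstReturnWeight w i (g i)) (hconn : ∀ i j : V, Nonempty (Path i j)) {j : V}
    (hinj : Function.Injective (g j ^ · : ℕ → R)) {c₀ : Path j j}
    (hc₀ : (visits c₀).count j = 1) (c : Path j j) :
    (visits c).Perm (List.replicate ((visits c).count j) (visits c₀)).flatten := by
  refine List.perm_iff_count.2 fun v => ?_
  obtain ⟨p⟩ := hconn v j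
  obtain ⟨q⟩ := hconn j v
  have hinj_v : Function.Injective (g v ^ · : ℕ → R) := by
    obtain rfl | hvj := eq_or_ne v j
    · exact hinj
    · exact (hg v).injective_pow (hg j) hinj hvj p q
  obtain ⟨c', hc'⟩ := exists_loop_count_eq_mul c₀ ((visits c).count j)
  have hcount : (visits c).count j = (visits c').count j := by rw [hc', hc₀, mul_one]
  rw [(hg v).count_eq_count (hg j) hinj_v p q hcount, hc']
  simp [List.count_flatten]

theorem FirstReturnWeight.not_injective_pow [Nontrivial V] {g : V → R}
    (hg : ∀ i, FirstReturnWeight w i (g i)) (hconn : ∀ i j : V, Nonempty (Path i j)) (j : V)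
    (haper : ∀ d : ℕ, (∀ c : Path j j, d ∣ c.length) → d = 1) :
    ¬ Function.Injective (g j ^ · : ℕ → R) := by
  classical
  intro hinj
  obtain ⟨i, hij⟩ := exists_ne j
  obtain ⟨p⟩ := hconn j i
  obtain ⟨q⟩ := hconn i j
  have hi : i ∈ visits (p.comp q) := by simp [end_mem_visits hij.symm p]
  have hlength : (p.comp q).length ≠ 0 := by
    simpa using (List.length_pos_of_mem hi).ne'
  obtain ⟨c₀, hc₀⟩ := exists_loop_count_eq_one (p.comp q) hlength
  have hperm := FirstReturnWeight.visits_perm hg hconn hinj hc₀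
  have hlength₀ : c₀.length = 1 := haper _ fun c => by
    simp [← length_visits c, (hperm c).length_eq, List.length_flatten]
  have hi₀ : i ∈ visits c₀ := by
    obtain ⟨l, hl, hil⟩ := List.mem_flatten.1 ((hperm _).mem_iff.1 hi)
    rwa [← List.eq_of_mem_replicate hl]
  have hcount₀ : (visits c₀).count j = (visits c₀).length := by
    rw [hc₀, length_visits, hlength₀]
  exact hij (List.count_eq_length.1 hcount₀ i hi₀).symm

end Weight

end Quiver

section AffineIteration

variable {R : Type*} [Semiring R]

/-- The affine map `Ψ(x) = a x + b` attached to `z = (a, b)`, as an element of the monoid of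
self-maps of `R` under composition, so that `Ψ_1 ∘ ⋯ ∘ Ψ_n` is a product of such elements. -/
def affineEnd (z : R × R) : Function.End R := fun x => z.1 * x + z.2

lemma injective_pow_affineEnd_one [CharZero R] [IsRightCancelMulZero R] {b : R} (hb : b ≠ 0) :
    Function.Injective (affineEnd (1, b) ^ · : ℕ → Function.End R) := by
  have pow_apply_zero (n : ℕ) : (affineEnd (1, b) ^ n) 0 = n * b := by
    induction n with
    | zero => simp [Function.End.one_def]
    | succ n ih =>
      calc (affineEnd (1, b) ^ (n + 1)) 0
          = affineEnd (1, b) ((affineEnd (1, b) ^ n) 0) := by rw [pow_succ']; rfl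
        _ = (n + 1 : ℕ) * b := by rw [ih, affineEnd, one_mul, Nat.cast_succ, add_one_mul]
  intro m n hmn
  have hmul : (m : R) * b = n * b := by
    rw [← pow_apply_zero, ← pow_apply_zero]
    exact congrFun hmn 0
  exact Nat.cast_injective (mul_right_cancel₀ hb hmul)

lemma tendsto_prod_affineEnd [TopologicalSpace R] [IsTopologicalSemiring R] {ι : Type*}
    {l : Filter ι} {z : ι → ℕ → R × R} {z' : ℕ → R × R} {n : ℕ}
    (hz : ∀ k < n, Tendsto (z · k) l (𝓝 (z' k))) {x : ι → R} {x' : R} (hx : Tendsto x l (𝓝 x')) :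
    Tendsto (fun m => ((List.range n).map fun k => affineEnd (z m k)).prod (x m)) l
      (𝓝 (((List.range n).map fun k => affineEnd (z' k)).prod x')) := by
  induction n generalizing x x' with
  | zero => exact hx
  | succ n ih =>
    simp only [List.prod_range_succ]
    have hn := hz n n.lt_succ_self
    exact ih (fun k hk => hz k (hk.trans n.lt_succ_self)) ((hn.fst_nhds.mul hx).add hn.snd_nhds)

end AffineIteration

namespace MMSetting

variable {S : Type*} [MeasurableSpace S] [MeasurableSingletonClass S] [Countable S]
variable {Ω : Type*} [MeasurableSpace Ω] (X : MMSetting S Ω)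

lemma prod_affineEnd_apply (n : ℕ) (ω : Ω) (x : ℝ) :
    ((List.range n).map fun k => affineEnd (X.A k ω, X.B k ω)).prod x
      = X.Pprod n ω * x + X.Ssum n ω := by
  induction n generalizing x with
  | zero => simp [Pprod, Ssum, Function.End.one_def]
  | succ n ih =>
    rw [List.prod_range_succ]
    refine (ih _).trans ?_
    simp only [affineEnd, Pprod, Ssum, Finset.prod_range_succ, Finset.sum_range_succ]
    ring

lemma tau_one_eq {i : S} {ω : Ω} {n : ℕ} (hn : 0 < n) (hi : X.M n ω = i)
    (hne : ∀ k, 0 < k → k < n → X.M k ω ≠ i) : X.tau i 1 ω = n :=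
  IsLeast.csInf_eq ⟨⟨hn, hi⟩, fun k ⟨hk, hki⟩ => not_lt.1 fun hkn => hne k hk hkn hki⟩

lemma exists_mem_trajectory {i : S} {G : Set Ω} (hG : X.P i G = 1) {f : ℕ → S} (hf : f 0 = i)
    {n : ℕ} (hp : ∀ k < n, X.p (f k) (f (k + 1)) ≠ 0) {E : ℕ → Set (ℝ × ℝ)}
    (hE : ∀ k, MeasurableSet (E k)) (hK : ∀ k < n, X.K (f k) (f (k + 1)) (E k) ≠ 0) :
    ∃ ω ∈ G, (∀ k ≤ n, X.M k ω = f k) ∧ ∀ k < n, (X.A k ω, X.B k ω) ∈ E k := by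
  have := X.prob i
  set T : Set Ω := (⋂ k ∈ Finset.range (n + 1), {ω | X.M k ω = f k}) ∩
    ⋂ k ∈ Finset.range n, {ω | (X.A k ω, X.B k ω) ∈ E k} with hT
  have hmeas : MeasurableSet T :=
    (Finset.measurableSet_biInter _ fun k _ => X.measM k (measurableSet_singleton (f k))).inter
      (Finset.measurableSet_biInter _ fun k _ => (X.measA k).prodMk (X.measB k) (hE k))
  have hpos : X.P i T ≠ 0 := by
    rw [hT, X.modulated i n f E hf hE, X.chain i n f hf]
    exact mul_ne_zero (Finset.prod_ne_zero_iff.2 fun k hk => hp k (Finset.mem_range.1 hk))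
      (Finset.prod_ne_zero_iff.2 fun k hk => hK k (Finset.mem_range.1 hk))
  have hlt : X.P i Set.univ < X.P i G + X.P i T := by
    rw [measure_univ, hG]
    exact ENNReal.lt_add_right ENNReal.one_ne_top hpos
  obtain ⟨ω, hωG, hωT⟩ := nonempty_inter_of_measure_lt_add (X.P i) hmeas
    (Set.subset_univ G) (Set.subset_univ T) hlt
  simp only [hT, Set.mem_inter_iff, Set.mem_iInter, Finset.mem_range, Nat.lt_succ_iff,
    Set.mem_ofPred_eq] at hωT
  exact ⟨ω, hωG, hωT⟩

lemma exists_seq_trajectory_tendsto {i : S} {G : Set Ω} (hG : X.P i G = 1) {f : ℕ → S}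
    (hf : f 0 = i) {n : ℕ} (hp : ∀ k < n, X.p (f k) (f (k + 1)) ≠ 0) {z : ℕ → ℝ × ℝ}
    (hz : ∀ k < n, z k ∈ (X.K (f k) (f (k + 1))).support) :
    ∃ ω : ℕ → Ω, (∀ m, ω m ∈ G) ∧ (∀ m, ∀ k ≤ n, X.M k (ω m) = f k) ∧
      ∀ k < n, Tendsto (fun m => (X.A k (ω m), X.B k (ω m))) atTop (𝓝 (z k)) := by
  obtain ⟨ε, -, hε, hε_lim⟩ := exists_seq_strictAnti_tendsto (0 : ℝ)
  have h (m : ℕ) := X.exists_mem_trajectory hG hf hp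
    (E := fun k => Metric.ball (z k) (ε m)) (fun _ => measurableSet_ball) fun k hk =>
      ((Measure.mem_support_iff_forall _).1 (hz k hk) _ (Metric.ball_mem_nhds _ (hε m))).ne'
  choose ω hωG hωM hωE using h
  exact ⟨ω, hωG, hωM, fun k hk => tendsto_iff_dist_tendsto_zero.2 <|
    squeeze_zero (fun _ => dist_nonneg) (fun m => (hωE m k hk).le) hε_lim⟩

lemma exists_trajectory_of_pos {i j : S} {n : ℕ} (h : 0 < X.P i {ω | X.M n ω = j}) :
    ∃ f : ℕ → S, f 0 = i ∧ f n = j ∧ ∀ k < n, X.p (f k) (f (k + 1)) ≠ 0 := by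
  have := X.prob i
  let Y (ω : Ω) (k : Fin (n + 1)) : S := X.M k ω
  have hY : Measurable Y := measurable_pi_lambda _ fun k => X.measM k
  have hstart : ∀ᵐ ω ∂X.P i, X.M 0 ω = i :=
    (prob_compl_eq_zero_iff (X.measM 0 (measurableSet_singleton i))).2 (X.start i)
  have hatom : ∀ᵐ ω ∂X.P i, (X.P i).map Y {Y ω} ≠ 0 :=
    ae_of_ae_map hY.aemeasurable (ae_iff_of_countable.2 fun _ => id)
  obtain ⟨ω, hj, hi, hω⟩ :=
    ((frequently_ae_iff.2 h.ne').and_eventually (hstart.and hatom)).exists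
  refine ⟨fun k => X.M k ω, hi, hj, fun k hk => ?_⟩
  have hcylinder : Y ⁻¹' {Y ω} = ⋂ k ∈ Finset.range (n + 1), {ω' | X.M k ω' = X.M k ω} := by
    ext ω'
    simp [Y, funext_iff, Fin.forall_iff]
  rw [Measure.map_apply hY (measurableSet_singleton _), hcylinder,
    X.chain i n (fun k => X.M k ω) hi, Finset.prod_ne_zero_iff] at hω
  exact hω k (Finset.mem_range.2 hk)

/-- The state space of the chain, as the vertex set of the directed graph of its possible
transitions. -/
def StateGraph (_X : MMSetting S Ω) : Type _ := S

instance : Quiver X.StateGraph := ⟨fun i j => PLift (X.p i j ≠ 0)⟩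

instance [Nontrivial S] : Nontrivial X.StateGraph := inferInstanceAs (Nontrivial S)

lemma exists_path_of_pos {i j : X.StateGraph} {n : ℕ} (h : 0 < X.P i {ω | X.M n ω = j}) :
    ∃ q : Quiver.Path i j, q.length = n := by
  obtain ⟨f, rfl, rfl, hf⟩ := X.exists_trajectory_of_pos h
  exact exists_path_length_eq (V := X.StateGraph) f n fun k hk => ⟨⟨hf k hk⟩⟩

lemma nonempty_path (i j : X.StateGraph) : Nonempty (Quiver.Path i j) :=
  let ⟨_, hn⟩ := X.irreducible i j
  let ⟨q, _⟩ := X.exists_path_of_pos hn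
  ⟨q⟩

lemma eq_one_of_dvd_loop_length (i : X.StateGraph) (d : ℕ)
    (h : ∀ c : Quiver.Path i i, d ∣ c.length) : d = 1 :=
  X.aperiodic i d fun _ _ hn =>
    let ⟨c, hc⟩ := X.exists_path_of_pos hn
    hc ▸ h c

lemma firstReturnWeight_affineEnd {i : X.StateGraph} {b : ℝ}
    (h : X.P i {ω | X.Ai i ω = 1 ∧ X.Bi i ω = b} = 1)
    {z : S → S → ℝ × ℝ} (hz : ∀ i j, z i j ∈ (X.K i j).support) :
    FirstReturnWeight (V := X.StateGraph) (fun {j k} _ => affineEnd (z j k)) i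
      (affineEnd (1, b)) := by
  intro k r e hr
  set c := r.cons e
  obtain ⟨ω, hω, hωM, hω_lim⟩ := X.exists_seq_trajectory_tendsto h (vertexAt_zero c)
    (fun n hn => (nonempty_hom_vertexAt c hn).some.down) fun n _ => hz _ _
  have htau (m : ℕ) : X.tau i 1 (ω m) = c.length := by
    refine X.tau_one_eq (Nat.succ_pos _) ((hωM m _ le_rfl).trans (vertexAt_length c))
      fun n hpos hn hni => hr ?_
    have hle : n ≤ r.length := Nat.le_of_lt_succ hn
    have hvertex : vertexAt r n = i := by
      rw [← vertexAt_cons_of_le r e hle]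
      exact (hωM m n hn.le).symm.trans hni
    have hmem := vertexAt_mem_visits r hpos hle
    rwa [hvertex] at hmem
  funext x
  have hlim := tendsto_prod_affineEnd hω_lim (tendsto_const_nhds (x := x))
  have hconst (m : ℕ) : ((List.range c.length).map fun n =>
      affineEnd (X.A n (ω m), X.B n (ω m))).prod x = affineEnd (1, b) x := by
    have hA : X.Pprod c.length (ω m) = 1 := htau m ▸ (hω m).1
    have hB : X.Ssum c.length (ω m) = b := htau m ▸ (hω m).2
    rw [prod_affineEnd_apply, hA, hB, affineEnd]
  simp only [hconst] at hlim
  have hweight := weightOfEPs_eq_prod_vertexAt (V := X.StateGraph) (fun j k => affineEnd (z j k)) c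
  exact (congrFun hweight x).trans (tendsto_nhds_unique hlim tendsto_const_nhds)

end MMSetting

/-- **Lemma 4.3**. In the Markov-modulated setting with `|S| > 1`: if there are constants
`b_i ∈ ℝ` such that `P_i((A_1^i, B_1^i) = (1, b_i)) = 1` for all `i ∈ S`, then `b_i = 0`
for all `i ∈ S`. -/
theorem constant_cycle_shift_vanishes
    {S : Type*} [MeasurableSpace S] [MeasurableSingletonClass S] [Countable S] [Nontrivial S]
    {Ω : Type*} [MeasurableSpace Ω] (X : MMSetting S Ω)
    (b : S → ℝ) (h : ∀ i : S, X.P i {ω | X.Ai i ω = 1 ∧ X.Bi i ω = b i} = 1) :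
    ∀ i : S, b i = 0 := by
  intro i
  by_contra hb
  have hsupport (j k : S) : (X.K j k).support.Nonempty :=
    have := X.Kprob j k
    Measure.nonempty_support (IsProbabilityMeasure.ne_zero _)
  choose z hz using hsupport
  exact FirstReturnWeight.not_injective_pow (V := X.StateGraph)
    (fun j => X.firstReturnWeight_affineEnd (h j) hz) X.nonempty_path i
    (X.eq_one_of_dvd_loop_length i) (injective_pow_affineEnd_one hb)

end Perpetuities
end
end
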